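/- Let δ̄ > 0 and let (u, v) ∈ S(δ̄) with associated convex domains Ω₁ and Ω₂ (each with nonempty interior and with 0 ∈ ∂Ω₁ ∩ ∂Ω₂). Then the left tangents satisfy L_{Ω₁}(0) · L_{Ω₂}(0) > 0 and the right tangents satisfy R_{Ω₁}(0) · R_{Ω₂}(0) > 0, where · denotes the Euclidean inner product (obliqueness: corresponding one-sided tangent directions of Ω₁ and Ω₂ at the origin make an angle strictly less than π/2). -/

import Mathlib

noncomputable section

open MeasureTheory Metric Set
open scoped RealInnerProductSpace

abbrev R2 : Type := EuclideanSpace ℝ (Fin 2)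

/-- `p` is a subgradient of `f` at `x`. -/
def SubgradAt (f : R2 → ℝ) (x p : R2) : Prop :=
  ∀ y : R2, f x + ⟪p, y - x⟫ ≤ f y

/-- `ψ` is a (canonically extended) potential of the optimal transport between `U₁` and `U₂`:
it is convex on `ℝ²`, all its subgradients lie in `closure U₂`, and its gradient map pushes
the Lebesgue measure restricted to `U₁` forward to the Lebesgue measure restricted to `U₂`. -/
def IsOTPotential (U₁ U₂ : Set R2) (ψ : R2 → ℝ) : Prop :=
  ConvexOn ℝ Set.univ ψ ∧
  (∀ x p : R2, SubgradAt ψ x p → p ∈ closure U₂) ∧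
  MeasureTheory.Measure.map (fun x => gradient ψ x) (MeasureTheory.volume.restrict U₁) =
    MeasureTheory.volume.restrict U₂

/-- `S` is a centred section of `w` at `x₀` of height `h`:
`S = {w < w x₀ + p · (· - x₀) + h}` for a slope `p` chosen so that
the centre of mass of `S` is `x₀`. -/
def IsCentredSection (w : R2 → ℝ) (x₀ : R2) (h : ℝ) (S : Set R2) : Prop :=
  ∃ p : R2, S = {x : R2 | w x < w x₀ + ⟪p, x - x₀⟫ + h} ∧
    (∫ x in S, (x - x₀) ∂(MeasureTheory.volume)) = 0

/-- Dilation of `S` about `x₀` by factor `t`. -/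
def dilate (x₀ : R2) (t : ℝ) (S : Set R2) : Set R2 :=
  (fun x => x₀ + t • (x - x₀)) '' S

/-- The (closed) ellipse centred at `0` with half-axis `A` in unit direction `e` and
half-axis `B` in the orthogonal unit direction `f`. -/
def ellipse (e f : R2) (A B : ℝ) : Set R2 :=
  {x : R2 | (⟪x, e⟫ / A) ^ 2 + (⟪x, f⟫ / B) ^ 2 ≤ 1}

/-- `w` is an Alexandrov solution of `det D² w = χ_Ω` in `ℝ²`: the Lebesgue measure of the
subdifferential image of any Borel set `E` equals the Lebesgue measure of `E ∩ Ω`. -/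
def AlexandrovSol (w : R2 → ℝ) (Ω : Set R2) : Prop :=
  ∀ E : Set R2, MeasurableSet E →
    MeasureTheory.volume (⋃ x ∈ E, {p : R2 | SubgradAt w x p}) =
      MeasureTheory.volume (E ∩ Ω)

/-- Membership of the pair `(u, v)` in the normalized family `S(δ̄)`, together with the
associated data: the domains `Ω₁, Ω₂`, and, for each height `h ∈ (0,1]`, the ellipse
`E_h = ellipse (e h) (f h) (L h) (l h)` centred at `0` (long half-axis `L h` in unit
direction `e h`, short half-axis `l h` in the orthogonal unit direction `f h`, area `hπ`,
so `L h * l h = h`), whose perpendicular ellipse is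
`E_h^⊥ = ellipse (f h) (e h) (L h) (l h)`.  The eccentricity is `η_u(h) = L h / l h`. -/
def InSFamily (δb : ℝ) (u v : R2 → ℝ) (Ω₁ Ω₂ : Set R2)
    (L l : ℝ → ℝ) (e f : ℝ → R2) : Prop :=
  ConvexOn ℝ Set.univ u ∧ ConvexOn ℝ Set.univ v ∧
  Convex ℝ Ω₁ ∧ Convex ℝ Ω₂ ∧
  (interior Ω₁).Nonempty ∧ (interior Ω₂).Nonempty ∧
  (0 : R2) ∈ frontier Ω₁ ∧ (0 : R2) ∈ frontier Ω₂ ∧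
  (fun x => gradient u x) '' Ω₁ = Ω₂ ∧ (fun y => gradient v y) '' Ω₂ = Ω₁ ∧
  AlexandrovSol u Ω₁ ∧ u 0 = 0 ∧ SubgradAt u 0 0 ∧
  AlexandrovSol v Ω₂ ∧ v 0 = 0 ∧ SubgradAt v 0 0 ∧
  (∀ y ∈ Ω₂, v y = ⨆ x : R2, (⟪x, y⟫ - u x)) ∧
  L 1 = 1 ∧ l 1 = 1 ∧
  (∀ h : ℝ, h ∈ Set.Ioc (0 : ℝ) 1 →
    ‖e h‖ = 1 ∧ ‖f h‖ = 1 ∧ ⟪e h, f h⟫ = 0 ∧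
    0 < l h ∧ l h ≤ L h ∧ L h * l h = h ∧
    (∃ S : Set R2, IsCentredSection u 0 h S ∧
      (∃ xh : R2, (fun z => xh + δb • z) '' ellipse (e h) (f h) (L h) (l h) ⊆ Ω₁ ∩ S) ∧
      S ⊆ (fun z => δb⁻¹ • z) '' ellipse (e h) (f h) (L h) (l h)) ∧
    (∃ S : Set R2, IsCentredSection v 0 h S ∧
      (∃ yh : R2, (fun z => yh + δb • z) '' ellipse (f h) (e h) (L h) (l h) ⊆ Ω₂ ∩ S) ∧
      S ⊆ (fun z => δb⁻¹ • z) '' ellipse (f h) (e h) (L h) (l h)))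

/-- `z ↦ t • x` cone over `Ω` with vertex `0` (closed): the tangent cone of `Ω` at `0`. -/
def tangentConeZero (Ω : Set R2) : Set R2 :=
  closure {y : R2 | ∃ t : ℝ, 0 ≤ t ∧ ∃ x ∈ Ω, y = t • x}

/-- The planar cross product (determinant) of two vectors. -/
def det2 (a b : R2) : ℝ := a 0 * b 1 - a 1 * b 0

/-- `r` is the unit direction of the right tangent ray of `∂Ω` at `0`:
it lies in the tangent cone of `Ω` at `0` and the whole tangent cone lies
(weakly) counterclockwise from it. -/
def IsRightTangent (Ω : Set R2) (r : R2) : Prop :=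
  ‖r‖ = 1 ∧ r ∈ tangentConeZero Ω ∧ ∀ x ∈ tangentConeZero Ω, 0 ≤ det2 r x

/-- `l` is the unit direction of the left tangent ray of `∂Ω` at `0`:
it lies in the tangent cone of `Ω` at `0` and the whole tangent cone lies
(weakly) clockwise from it. -/
def IsLeftTangent (Ω : Set R2) (l : R2) : Prop :=
  ‖l‖ = 1 ∧ l ∈ tangentConeZero Ω ∧ ∀ x ∈ tangentConeZero Ω, det2 l x ≤ 0

/-- The open cone of direction `e` and opening angle `θ`. -/
def cone2 (e : R2) (θ : ℝ) : Set R2 :=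
  {y : R2 | ∃ lam : ℝ, 0 < lam ∧ ∃ w : R2, ‖w‖ = 1 ∧
    InnerProductGeometry.angle w e < θ ∧ y = lam • w}

/-! ### Subgradients of convex functions on the plane -/

lemma convex_continuous {u : R2 → ℝ} (hu : ConvexOn ℝ univ u) : Continuous u :=
  hu.locallyLipschitz.continuous

lemma exists_subgradAt {u : R2 → ℝ} (hu : ConvexOn ℝ univ u) (x : R2) :
    ∃ p, SubgradAt u x p := by
  have hc := convex_continuous hu
  have hE : Convex ℝ {z : R2 × ℝ | u z.1 < z.2} := by
    have := hu.convex_strict_epigraph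
    simpa using this
  have hO : IsOpen {z : R2 × ℝ | u z.1 < z.2} :=
    isOpen_lt (hc.comp continuous_fst) continuous_snd
  obtain ⟨F, hF⟩ := geometric_hahn_banach_open_point hE hO (x := (x, u x)) (by simp)
  set c := F (0, 1) with hcdef
  have hsplit : ∀ (y : R2) (r : ℝ), F (y, r) = F (y, 0) + r * c := by
    intro y r
    have : ((y, r) : R2 × ℝ) = (y, 0) + r • (0, 1) := by simp
    rw [this, map_add, map_smul, smul_eq_mul]
  have hcneg : c < 0 := by
    have := hF (x, u x + 1) (by simp)
    rw [hsplit, hsplit x (u x)] at this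
    linarith
  have key : ∀ y, F (y, 0) + u y * c ≤ F (x, 0) + u x * c := by
    intro y
    by_contra! hlt
    set d := F (y, 0) + u y * c - (F (x, 0) + u x * c) with hd
    have hdpos : 0 < d := by linarith
    have := hF (y, u y + d / (-c)) (by simpa using div_pos hdpos (by linarith))
    rw [hsplit, hsplit x (u x)] at this
    have e : d / (-c) * c = - d := by
      have := hcneg.ne
      field_simp
    nlinarith
  let g : R2 →L[ℝ] ℝ := F.comp (ContinuousLinearMap.inl ℝ R2 ℝ)
  refine ⟨(-c)⁻¹ • (InnerProductSpace.toDual ℝ R2).symm g, fun y => ?_⟩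
  rw [real_inner_smul_left, InnerProductSpace.toDual_symm_apply]
  have hg : g (y - x) = F (y, 0) - F (x, 0) := by
    simp only [map_sub]; rfl
  rw [hg]
  have := key y
  have h2 : (-c)⁻¹ * (F (y, 0) - F (x, 0)) ≤ u y - u x := by
    rw [inv_mul_le_iff₀ (by linarith)]
    linarith
  linarith

lemma SubgradAt.combo {u : R2 → ℝ} {x p q : R2} (hp : SubgradAt u x p) (hq : SubgradAt u x q)
    {a b : ℝ} (ha : 0 ≤ a) (hb : 0 ≤ b) (hab : a + b = 1) : SubgradAt u x (a • p + b • q) := by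
  intro y
  have h1 := mul_le_mul_of_nonneg_left (hp y) ha
  have h2 := mul_le_mul_of_nonneg_left (hq y) hb
  rw [inner_add_left, real_inner_smul_left, real_inner_smul_left]
  have : a = 1 - b := by linarith
  subst this
  nlinarith

lemma SubgradAt.mono {u : R2 → ℝ} {x y p q : R2} (hp : SubgradAt u x p) (hq : SubgradAt u y q) :
    0 ≤ ⟪q - p, y - x⟫ := by
  have h1 := hp y
  have h2 := hq x
  have : ⟪q, x - y⟫ = - ⟪q, y - x⟫ := by rw [← inner_neg_right, neg_sub]
  rw [inner_sub_left]
  linarith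

lemma isClosed_subgrad {u : R2 → ℝ} (hu : ConvexOn ℝ univ u) :
    IsClosed {z : R2 × R2 | SubgradAt u z.1 z.2} := by
  have hc := convex_continuous hu
  have : {z : R2 × R2 | SubgradAt u z.1 z.2} =
      ⋂ y, {z : R2 × R2 | u z.1 + ⟪z.2, y - z.1⟫ ≤ u y} := by
    ext z; simp [SubgradAt]
  rw [this]
  refine isClosed_iInter fun y => isClosed_le ?_ continuous_const
  exact (hc.comp continuous_fst).add
    (Continuous.inner continuous_snd (continuous_const.sub continuous_fst))

lemma subgrad_bounded {u : R2 → ℝ} (hu : ConvexOn ℝ univ u) {S : Set R2} (hS : IsCompact S) :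
    ∃ M, ∀ x ∈ S, ∀ p, SubgradAt u x p → ‖p‖ ≤ M := by
  have hc := convex_continuous hu
  obtain ⟨A, hA⟩ := (hS.cthickening (r := 1)).exists_bound_of_continuousOn hc.continuousOn
  refine ⟨2 * A, fun x hx p hp => ?_⟩
  have hx' : x ∈ cthickening 1 S := self_subset_cthickening S hx
  have hAx := hA x hx'
  rcases eq_or_ne p 0 with rfl | hp0
  · have := norm_nonneg (u x)
    simp; linarith
  have hn : 0 < ‖p‖ := norm_pos_iff.2 hp0
  have hy : x + ‖p‖⁻¹ • p ∈ cthickening 1 S := by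
    refine mem_cthickening_of_dist_le _ x 1 S hx ?_
    simp [norm_smul, hn.ne']
  have h1 := hp (x + ‖p‖⁻¹ • p)
  have h2 := hA _ hy
  rw [add_sub_cancel_left, real_inner_smul_right, real_inner_self_eq_norm_sq] at h1
  have e : ‖p‖⁻¹ * ‖p‖ ^ 2 = ‖p‖ := by field_simp
  rw [e] at h1
  rw [Real.norm_eq_abs] at hAx h2
  have := abs_le.1 hAx
  have := abs_le.1 h2
  linarith

lemma isCompact_subgrad {u : R2 → ℝ} (hu : ConvexOn ℝ univ u) {S : Set R2} (hS : IsCompact S) :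
    IsCompact {z : R2 × R2 | z.1 ∈ S ∧ SubgradAt u z.1 z.2} := by
  obtain ⟨M, hM⟩ := subgrad_bounded hu hS
  refine (hS.prod (isCompact_closedBall (0 : R2) M)).of_isClosed_subset
    ((hS.isClosed.preimage continuous_fst).inter (isClosed_subgrad hu)) ?_
  rintro ⟨x, p⟩ ⟨h1, h2⟩
  exact ⟨h1, by simpa using hM x h1 p h2⟩

/-- Upper semicontinuity of the subdifferential, uniformly near a compact set. -/
lemma subgrad_usc {u : R2 → ℝ} (hu : ConvexOn ℝ univ u) {K G : Set R2} (hK : IsCompact K)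
    (hG : IsOpen G) (h : ∀ x ∈ K, ∀ p, SubgradAt u x p → p ∈ G) :
    ∃ ρ > 0, ∀ x₀ ∈ K, ∀ x, dist x x₀ ≤ ρ → ∀ p, SubgradAt u x p → p ∈ G := by
  have hT : IsCompact ({z : R2 × R2 | z.1 ∈ cthickening 1 K ∧ SubgradAt u z.1 z.2} ∩
      (Prod.snd ⁻¹' Gᶜ)) :=
    (isCompact_subgrad hu hK.cthickening).inter_right (hG.isClosed_compl.preimage continuous_snd)
  have hZ := hT.image continuous_fst
  obtain ⟨δ, hδ, hδK⟩ := hK.exists_thickening_subset_open hZ.isClosed.isOpen_compl (by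
    rintro x hx ⟨z, ⟨hz1, hz2⟩, rfl⟩
    exact hz2 (h _ hx _ hz1.2))
  refine ⟨min 1 (δ / 2), by positivity, fun x₀ hx₀ x hx p hp => ?_⟩
  by_contra hpG
  have h1 : x ∈ cthickening 1 K :=
    mem_cthickening_of_dist_le _ x₀ _ _ hx₀ (hx.trans (min_le_left _ _))
  have h2 : x ∈ thickening δ K := by
    refine mem_thickening_iff.2
      ⟨x₀, hx₀, lt_of_le_of_lt (hx.trans (min_le_right _ _)) (by linarith)⟩
  exact hδK h2 ⟨(x, p), ⟨⟨h1, hp⟩, hpG⟩, rfl⟩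

/-- A local supporting plane of a convex function is a global one. -/
lemma subgradAt_of_local {u : R2 → ℝ} (hu : ConvexOn ℝ univ u) {x p : R2}
    (h : ∃ U ∈ nhds x, ∀ y ∈ U, u x + ⟪p, y - x⟫ ≤ u y) : SubgradAt u x p := by
  obtain ⟨U, hU, hy⟩ := h
  have hcv : ConvexOn ℝ univ (fun y => u y + (-(innerSL ℝ p)) y) :=
    hu.add ((-(innerSL ℝ p)).toLinearMap.convexOn convex_univ)
  have := IsMinOn.of_isLocalMinOn_of_convexOn (s := univ) (a := x) (mem_univ _) (by
    refine Filter.mem_of_superset (mem_nhdsWithin_of_mem_nhds hU) fun y hyU => ?_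
    have := hy y hyU
    simp only [mem_ofPred_eq, neg_apply, innerSL_apply_apply]
    rw [inner_sub_right] at this
    linarith) hcv
  intro y
  have h2 := this (mem_univ y)
  simp only [mem_ofPred_eq, neg_apply, innerSL_apply_apply] at h2
  rw [inner_sub_right]
  linarith

lemma SubgradAt.eq_gradient {u : R2 → ℝ} {x p : R2} (hp : SubgradAt u x p)
    (hd : DifferentiableAt ℝ u x) : p = gradient u x := by
  have hg := hd.hasGradientAt.hasFDerivAt
  have hm : IsLocalMin (fun y => u y - ⟪p, y - x⟫) x := by
    refine Filter.Eventually.of_forall fun y => ?_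
    have := hp y
    simp only [sub_self, inner_zero_right, sub_zero]
    linarith
  have hl : HasFDerivAt (fun y => ⟪p, y - x⟫) (innerSL ℝ p) x := by
    have : HasFDerivAt (fun y : R2 => innerSL ℝ p (y - x)) ((innerSL ℝ p).comp
      (ContinuousLinearMap.id ℝ R2)) x :=
      (innerSL ℝ p).hasFDerivAt.comp x ((hasFDerivAt_id x).sub_const x)
    simpa using this
  have h0 := hm.hasFDerivAt_eq_zero (hg.sub hl)
  have : ∀ y, ⟪gradient u x, y⟫ = ⟪p, y⟫ := by
    intro y
    have := DFunLike.congr_fun h0 y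
    simp only [sub_apply, InnerProductSpace.toDual_apply_apply,
      innerSL_apply_apply, zero_apply] at this
    linarith
  exact (ext_inner_right ℝ this).symm

lemma subgradAt_gradient {u : R2 → ℝ} (hu : ConvexOn ℝ univ u) {x : R2}
    (hd : DifferentiableAt ℝ u x) : SubgradAt u x (gradient u x) := by
  obtain ⟨p, hp⟩ := exists_subgradAt hu x
  rwa [← hp.eq_gradient hd]

lemma convex_combo_le {u : R2 → ℝ} (hu : ConvexOn ℝ univ u) (x y : R2) {a b : ℝ} (ha : 0 ≤ a)
    (hb : 0 ≤ b) (hab : a + b = 1) : u (a • x + b • y) ≤ a * u x + b * u y :=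
  hu.2 (mem_univ x) (mem_univ y) ha hb hab

lemma convex_smul_le {u : R2 → ℝ} (hu : ConvexOn ℝ univ u) (hu0 : u 0 = 0) (x : R2) {a : ℝ}
    (ha : 0 ≤ a) (ha1 : a ≤ 1) : u (a • x) ≤ a * u x := by
  have := convex_combo_le hu x 0 ha (by linarith : 0 ≤ 1 - a) (by ring)
  simpa [hu0] using this

/-! ### The range of the subdifferential -/

lemma abs_sub_le_of_subgrad_bound {u : R2 → ℝ} (hu : ConvexOn ℝ univ u) {S : Set R2} {M : ℝ}
    (hM : ∀ x ∈ S, ∀ p, SubgradAt u x p → ‖p‖ ≤ M) {x y : R2} (hx : x ∈ S) (hy : y ∈ S) :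
    |u x - u y| ≤ M * ‖x - y‖ := by
  obtain ⟨p, hp⟩ := exists_subgradAt hu x
  obtain ⟨q, hq⟩ := exists_subgradAt hu y
  have h1 := hp y
  have h2 := hq x
  have h3 := abs_le.1 (abs_real_inner_le_norm p (y - x))
  have h4 := abs_le.1 (abs_real_inner_le_norm q (x - y))
  have h5 := mul_le_mul_of_nonneg_right (hM x hx p hp) (norm_nonneg (y - x))
  have h6 := mul_le_mul_of_nonneg_right (hM y hy q hq) (norm_nonneg (x - y))
  rw [norm_sub_rev y x] at h3 h5
  rw [abs_le]
  constructor <;> linarith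

lemma volume_not_differentiableAt {u : R2 → ℝ} (hu : ConvexOn ℝ univ u) :
    volume {x | ¬ DifferentiableAt ℝ u x} = 0 := by
  have : {x | ¬ DifferentiableAt ℝ u x} ⊆
      ⋃ n : ℕ, {x | ¬ (x ∈ ball (0 : R2) n → DifferentiableWithinAt ℝ u (ball 0 n) x)} := by
    intro x hx
    obtain ⟨n, hn⟩ := exists_nat_gt ‖x‖
    refine mem_iUnion.2 ⟨n, fun hxn => hx ?_⟩
    exact (hxn (by simpa using hn)).differentiableAt (isOpen_ball.mem_nhds (by simpa using hn))
  refine measure_mono_null this (measure_iUnion_null fun n => ?_)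
  obtain ⟨M, hM⟩ := subgrad_bounded hu (isCompact_closedBall (0 : R2) n)
  have hL : LipschitzOnWith M.toNNReal u (ball 0 n) := by
    refine LipschitzOnWith.of_dist_le_mul fun x hx y hy => ?_
    rw [Real.dist_eq, dist_eq_norm]
    refine (abs_sub_le_of_subgrad_bound hu hM (ball_subset_closedBall hx)
      (ball_subset_closedBall hy)).trans ?_
    exact mul_le_mul_of_nonneg_right (Real.le_coe_toNNReal M) (norm_nonneg _)
  exact hL.ae_differentiableWithinAt_of_mem (μ := volume)

lemma exists_subgradAt_of_mem_image {u : R2 → ℝ} (hu : ConvexOn ℝ univ u) {Ω₁ Ω₂ : Set R2}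
    (hgr : (fun x => gradient u x) '' Ω₁ = Ω₂) (hu0 : SubgradAt u 0 0) {q : R2} (hq : q ∈ Ω₂) :
    ∃ x, (x ∈ Ω₁ ∨ x = 0) ∧ SubgradAt u x q := by
  rw [← hgr] at hq
  obtain ⟨x, hx, rfl⟩ := hq
  by_cases hd : DifferentiableAt ℝ u x
  · exact ⟨x, Or.inl hx, subgradAt_gradient hu hd⟩
  · refine ⟨0, Or.inr rfl, ?_⟩
    simpa [gradient_eq_zero_of_not_differentiableAt hd] using hu0

lemma norm_le_abs_add_abs (z : R2) : ‖z‖ ≤ |z 0| + |z 1| := by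
  rw [EuclideanSpace.norm_eq, Fin.sum_univ_two]
  refine Real.sqrt_le_iff.2 ⟨by positivity, ?_⟩
  simp only [Real.norm_eq_abs]
  nlinarith [abs_nonneg (z 0), abs_nonneg (z 1)]

/-- If a ball of slopes is attained, then so is every slope strictly between an attained slope and
the centre of the ball. -/
lemma subgradAt_combo_attained {u : R2 → ℝ} (hu : ConvexOn ℝ univ u) {p q : R2} {r : ℝ}
    (hr : 0 < r) (hp : ∃ x, SubgradAt u x p)
    (hq : ∀ q' ∈ closedBall q r, ∃ x, SubgradAt u x q') {t : ℝ} (ht : 0 < t) (ht1 : t ≤ 1) :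
    ∃ x, SubgradAt u x ((1 - t) • p + t • q) := by
  have hc := convex_continuous hu
  obtain ⟨x₀, hx₀⟩ := hp
  have hdir : ∀ d : R2, ‖d‖ ≤ 1 → ∃ C, ∀ z, ⟪q, z⟫ + r * ⟪d, z⟫ - C ≤ u z := by
    intro d hd
    obtain ⟨x, hx⟩ := hq (q + r • d) (by
      simp [norm_smul, abs_of_pos hr]; nlinarith)
    refine ⟨⟪q + r • d, x⟫ - u x, fun z => ?_⟩
    have := hx z
    rw [inner_sub_right] at this
    have e : ⟪q + r • d, z⟫ = ⟪q, z⟫ + r * ⟪d, z⟫ := by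
      rw [inner_add_left, real_inner_smul_left]
    linarith
  have hcoord : ∀ i : Fin 2, ∃ C, ∀ z : R2, ⟪q, z⟫ + r * |z i| - C ≤ u z := by
    intro i
    obtain ⟨C1, h1⟩ := hdir (EuclideanSpace.single i 1) (by simp)
    obtain ⟨C2, h2⟩ := hdir (-EuclideanSpace.single i 1) (by simp)
    refine ⟨max C1 C2, fun z => ?_⟩
    have a1 := h1 z
    have a2 := h2 z
    rw [inner_neg_left] at a2
    simp only [EuclideanSpace.inner_single_left, map_one, one_mul] at a1 a2
    have := le_max_left C1 C2
    have := le_max_right C1 C2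
    rcases abs_cases (z i) with ⟨h, _⟩ | ⟨h, _⟩ <;> rw [h] <;> linarith
  obtain ⟨C0, h0⟩ := hcoord 0
  obtain ⟨C1, h1⟩ := hcoord 1
  have hgrow : ∀ z, ⟪q, z⟫ + r / 2 * ‖z‖ - (C0 + C1) / 2 ≤ u z := by
    intro z
    have := mul_le_mul_of_nonneg_left (norm_le_abs_add_abs z) hr.le
    have := h0 z
    have := h1 z
    linarith
  set w := (1 - t) • p + t • q with hw
  let g : R2 → ℝ := fun z => u z - ⟪w, z⟫
  have hgc : Continuous g := hc.sub (Continuous.inner continuous_const continuous_id)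
  have hlow : ∀ z, (1 - t) * (u x₀ - ⟪p, x₀⟫) + t * (r / 2 * ‖z‖ - (C0 + C1) / 2) ≤ g z := by
    intro z
    have a1 := hx₀ z
    have a2 := hgrow z
    rw [inner_sub_right] at a1
    have e : ⟪w, z⟫ = (1 - t) * ⟪p, z⟫ + t * ⟪q, z⟫ := by
      rw [hw, inner_add_left, real_inner_smul_left, real_inner_smul_left]
    have b1 := mul_le_mul_of_nonneg_left a1 (by linarith : 0 ≤ 1 - t)
    have b2 := mul_le_mul_of_nonneg_left a2 ht.le
    simp only [g]
    rw [e]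
    linarith
  have htend : Filter.Tendsto g (Filter.cocompact R2) Filter.atTop := by
    refine Filter.tendsto_atTop_mono hlow ?_
    refine Filter.tendsto_atTop_add_const_left _ _ ?_
    refine Filter.Tendsto.const_mul_atTop ht ?_
    refine Filter.tendsto_atTop_add_const_right _ _ ?_
    exact Filter.Tendsto.const_mul_atTop (by positivity) tendsto_norm_cocompact_atTop
  obtain ⟨x, hx⟩ := hgc.exists_forall_le htend
  refine ⟨x, fun y => ?_⟩
  have := hx y
  simp only [g] at this
  rw [inner_sub_right]
  linarith

/-- All the slopes of `u` lie in the closure of the target. -/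
lemma subgradAt_mem_closure {u : R2 → ℝ} (hu : ConvexOn ℝ univ u) {Ω₁ Ω₂ : Set R2}
    (hΩ₁ : Convex ℝ Ω₁) (hi₂ : (interior Ω₂).Nonempty)
    (hgr : (fun x => gradient u x) '' Ω₁ = Ω₂) (hA : AlexandrovSol u Ω₁) (hu0 : SubgradAt u 0 0)
    {x p : R2} (hp : SubgradAt u x p) : p ∈ closure Ω₂ := by
  by_contra hpc
  obtain ⟨q, hq⟩ := hi₂
  obtain ⟨r, hr, hrb⟩ := Metric.isOpen_iff.1 isOpen_interior q hq
  have hrb' : ball q r ⊆ Ω₂ := hrb.trans interior_subset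
  -- a small step from `p` towards `q`
  obtain ⟨ε, hε, hεb⟩ := Metric.isOpen_iff.1 (isClosed_closure (s := Ω₂)).isOpen_compl p hpc
  set t : ℝ := min 1 (ε / (2 * (‖q - p‖ + r))) with ht
  have hden : 0 < 2 * (‖q - p‖ + r) := by positivity
  have htpos : 0 < t := lt_min one_pos (div_pos hε hden)
  have ht1 : t ≤ 1 := min_le_left _ _
  have htε : t * (‖q - p‖ + r) < ε := by
    have : t ≤ ε / (2 * (‖q - p‖ + r)) := min_le_right _ _
    rw [le_div_iff₀ hden] at this
    linarith
  set c := (1 - t) • p + t • q with hcdef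
  have hV : ∀ y ∈ ball c (t * (r / 2)), y ∉ closure Ω₂ ∧ ∃ x, SubgradAt u x y := by
    intro y hy
    set q' := q + t⁻¹ • (y - c) with hq'
    have hyq : y = (1 - t) • p + t • q' := by
      rw [hq', smul_add, smul_smul, mul_inv_cancel₀ htpos.ne', one_smul, hcdef]; abel
    have hq'd : ‖q' - q‖ < r / 2 := by
      rw [hq', add_sub_cancel_left, norm_smul, norm_inv, Real.norm_eq_abs, abs_of_pos htpos,
        inv_mul_lt_iff₀ htpos]
      simpa [dist_eq_norm] using hy
    constructor
    · refine hεb ?_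
      rw [mem_ball, dist_eq_norm, hyq]
      have : (1 - t) • p + t • q' - p = t • ((q - p) + (q' - q)) := by module
      rw [this, norm_smul, Real.norm_eq_abs, abs_of_pos htpos]
      refine lt_of_le_of_lt (mul_le_mul_of_nonneg_left (norm_add_le _ _) htpos.le) ?_
      refine lt_of_le_of_lt (mul_le_mul_of_nonneg_left ?_ htpos.le) htε
      linarith
    · rw [hyq]
      refine subgradAt_combo_attained hu (r := r / 4) (by positivity) ⟨x, hp⟩ (fun q'' hq'' => ?_)
        htpos ht1
      obtain ⟨z, -, hz⟩ := exists_subgradAt_of_mem_image hu hgr hu0 (hrb' (a := q'') (by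
        rw [mem_closedBall, dist_eq_norm] at hq''
        rw [mem_ball, dist_eq_norm]
        have : q'' - q = (q'' - q') + (q' - q) := by abel
        rw [this]
        refine lt_of_le_of_lt (norm_add_le _ _) ?_
        linarith))
      exact ⟨z, hz⟩
  -- almost no slope is attained outside the good part of `Ω₁`
  set N : Set R2 := (closure Ω₁)ᶜ ∪ frontier Ω₁ ∪ {x | ¬ DifferentiableAt ℝ u x} with hN
  have hNm : MeasurableSet N :=
    ((isClosed_closure.measurableSet.compl).union isClosed_frontier.measurableSet).union
      (measurableSet_of_differentiableAt ℝ u).compl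
  have hN0 : volume (N ∩ Ω₁) = 0 := by
    refine measure_mono_null (t := frontier Ω₁ ∪ {x | ¬ DifferentiableAt ℝ u x}) ?_ ?_
    · rintro z ⟨(hz | hz) | hz, hz1⟩
      · exact absurd (subset_closure hz1) hz
      · exact Or.inl hz
      · exact Or.inr hz
    · exact measure_union_null (hΩ₁.addHaar_frontier volume) (volume_not_differentiableAt hu)
  have hsub : ball c (t * (r / 2)) ⊆ ⋃ x ∈ N, {p : R2 | SubgradAt u x p} := by
    intro y hy
    obtain ⟨hyc, z, hz⟩ := hV y hy
    refine mem_iUnion₂.2 ⟨z, ?_, hz⟩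
    by_contra hzN
    simp only [hN, mem_union, not_or, mem_compl_iff, not_not, mem_ofPred_eq] at hzN
    obtain ⟨⟨h1, h2⟩, h3⟩ := hzN
    have hzΩ : z ∈ Ω₁ := by
      by_contra h
      exact h2 ⟨h1, fun h' => h (interior_subset h')⟩
    apply hyc
    rw [hz.eq_gradient h3]
    exact subset_closure (hgr ▸ ⟨z, hzΩ, rfl⟩)
  have h0 : volume (ball c (t * (r / 2))) = 0 :=
    measure_mono_null hsub (by rw [hA N hNm, hN0])
  exact (measure_ball_pos volume c (by positivity)).ne' h0

/-! ### Young's inequality and duality -/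

section Young

variable {u v : R2 → ℝ} {Ω₁ Ω₂ : Set R2}

lemma bddAbove_legendre {x y : R2} (h : SubgradAt u x y) :
    ∀ z, ⟪z, y⟫ - u z ≤ ⟪x, y⟫ - u x := by
  intro z
  have := h z
  rw [inner_sub_right, real_inner_comm z y, real_inner_comm x y] at this
  linarith

lemma young_of_mem_target (hr : ∀ q ∈ Ω₂, ∃ x, SubgradAt u x q)
    (hleg : ∀ y ∈ Ω₂, v y = ⨆ x : R2, (⟪x, y⟫ - u x)) {y : R2} (hy : y ∈ Ω₂) (x : R2) :
    ⟪x, y⟫ ≤ u x + v y := by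
  obtain ⟨z, hz⟩ := hr y hy
  have hb : BddAbove (range fun x : R2 => ⟪x, y⟫ - u x) :=
    ⟨⟪z, y⟫ - u z, by rintro _ ⟨w, rfl⟩; exact bddAbove_legendre hz w⟩
  have := le_ciSup hb x
  rw [← hleg y hy] at this
  linarith

lemma young_of_mem_closure_target (hv : ConvexOn ℝ univ v)
    (hr : ∀ q ∈ Ω₂, ∃ x, SubgradAt u x q)
    (hleg : ∀ y ∈ Ω₂, v y = ⨆ x : R2, (⟪x, y⟫ - u x)) (x : R2) {y : R2} (hy : y ∈ closure Ω₂) :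
    ⟪x, y⟫ ≤ u x + v y := by
  have hcl : IsClosed {y : R2 | ⟪x, y⟫ ≤ u x + v y} :=
    isClosed_le (Continuous.inner continuous_const continuous_id)
      (continuous_const.add (convex_continuous hv))
  exact closure_minimal (fun y hy => young_of_mem_target hr hleg hy x) hcl hy

lemma young_eq_of_subgradAt (hv : ConvexOn ℝ univ v)
    (hc₂ : Convex ℝ Ω₂) (hi₂ : (interior Ω₂).Nonempty)
    (hr : ∀ q ∈ Ω₂, ∃ x, SubgradAt u x q)
    (hleg : ∀ y ∈ Ω₂, v y = ⨆ x : R2, (⟪x, y⟫ - u x)) {x p : R2} (hp : SubgradAt u x p)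
    (hpc : p ∈ closure Ω₂) : u x + v p = ⟪x, p⟫ := by
  refine le_antisymm ?_ (young_of_mem_closure_target hv hr hleg x hpc)
  obtain ⟨q, hq⟩ := hi₂
  have hvc := convex_continuous hv
  have key : ∀ t ∈ Ioo (0 : ℝ) 1, v ((1 - t) • p + t • q) ≤ (1 - t) * (⟪x, p⟫ - u x) + t * v q := by
    intro t ht
    have hm : (1 - t) • p + t • q ∈ Ω₂ := interior_subset
      (hc₂.combo_closure_interior_mem_interior hpc hq (by linarith [ht.2]) ht.1 (by ring))
    rw [hleg _ hm]
    refine ciSup_le fun z => ?_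
    have h1 := mul_le_mul_of_nonneg_left (bddAbove_legendre hp z) (by linarith [ht.2] : 0 ≤ 1 - t)
    have h2 := mul_le_mul_of_nonneg_left
      (young_of_mem_target hr hleg (interior_subset hq) z) ht.1.le
    rw [inner_add_right, real_inner_smul_right, real_inner_smul_right]
    linarith
  have hL : Filter.Tendsto (fun t : ℝ => v ((1 - t) • p + t • q)) (nhdsWithin 0 (Ioi 0))
      (nhds (v p)) := by
    have : Continuous (fun t : ℝ => v ((1 - t) • p + t • q)) := hvc.comp (by fun_prop)
    have h := this.tendsto 0
    simp only [sub_zero, one_smul, zero_smul, add_zero] at h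
    exact h.mono_left nhdsWithin_le_nhds
  have hR : Filter.Tendsto (fun t : ℝ => (1 - t) * (⟪x, p⟫ - u x) + t * v q)
      (nhdsWithin 0 (Ioi 0)) (nhds (⟪x, p⟫ - u x)) := by
    have : Continuous (fun t : ℝ => (1 - t) * (⟪x, p⟫ - u x) + t * v q) := by fun_prop
    have h := this.tendsto 0
    simp only [sub_zero, one_mul, zero_mul, add_zero] at h
    exact h.mono_left nhdsWithin_le_nhds
  have := le_of_tendsto_of_tendsto hL hR (by
    filter_upwards [Ioo_mem_nhdsGT (zero_lt_one (α := ℝ))] with t ht using key t ht)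
  linarith

lemma young_of_mem_closure_source (hu : ConvexOn ℝ univ u)
    (hy1 : ∀ x, ∀ y ∈ closure Ω₂, ⟪x, y⟫ ≤ u x + v y)
    (hr : ∀ x ∈ Ω₁, ∃ y ∈ closure Ω₂, SubgradAt v y x) {x : R2} (hx : x ∈ closure Ω₁) (y : R2) :
    ⟪x, y⟫ ≤ u x + v y := by
  have hcl : IsClosed {x : R2 | ⟪x, y⟫ ≤ u x + v y} :=
    isClosed_le (Continuous.inner continuous_id continuous_const)
      ((convex_continuous hu).add continuous_const)
  refine closure_minimal (fun x hx => ?_) hcl hx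
  obtain ⟨y', hy', hs⟩ := hr x hx
  have h1 := hs y
  have h2 := hy1 x y' hy'
  rw [inner_sub_right] at h1
  simp only [mem_ofPred_eq]
  linarith

lemma young_eq_of_subgradAt_dual (hu : ConvexOn ℝ univ u)
    (hy2 : ∀ x p, SubgradAt u x p → u x + v p = ⟪x, p⟫)
    (hy3 : ∀ x ∈ closure Ω₁, ∀ y, ⟪x, y⟫ ≤ u x + v y)
    {x y : R2} (hx : x ∈ closure Ω₁) (h : SubgradAt v y x) : u x + v y = ⟪x, y⟫ := by
  refine le_antisymm ?_ (hy3 x hx y)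
  obtain ⟨p, hp⟩ := exists_subgradAt hu x
  have h1 := hy2 x p hp
  have h2 := h p
  rw [inner_sub_right] at h2
  linarith

end Young

/-- Centred sections are comparable to a symmetric convex set and to the part of the section in
the domain. -/
def SecProp (u : R2 → ℝ) (Ω : Set R2) : Prop :=
  ∃ C : ℝ, 1 ≤ C ∧ ∀ h : ℝ, 0 < h → h ≤ 1 → ∃ K : Set R2, ∃ xh : R2,
    Convex ℝ K ∧ (∀ x ∈ K, -x ∈ K) ∧ (∀ x ∈ K, u x ≤ C * h) ∧
    (∀ x ∈ K, xh + x ∈ Ω ∧ u (xh + x) ≤ C * h) ∧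
    (∀ x ∈ closure Ω, u x ≤ h → C⁻¹ • x ∈ K) ∧
    (∀ x, u x ≤ h → u (-x) ≤ h → C⁻¹ • x ∈ K)

/-- The information on a pair of potentials used in the proof of obliqueness. -/
structure OTPair (u v : R2 → ℝ) (Ω₁ Ω₂ : Set R2) : Prop where
  cu : ConvexOn ℝ univ u
  cv : ConvexOn ℝ univ v
  c1 : Convex ℝ Ω₁
  c2 : Convex ℝ Ω₂
  i1 : (interior Ω₁).Nonempty
  i2 : (interior Ω₂).Nonempty
  z1 : (0 : R2) ∈ frontier Ω₁
  z2 : (0 : R2) ∈ frontier Ω₂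
  alex1 : AlexandrovSol u Ω₁
  alex2 : AlexandrovSol v Ω₂
  u0 : u 0 = 0
  v0 : v 0 = 0
  su : SubgradAt u 0 0
  sv : SubgradAt v 0 0
  r1 : ∀ x p, SubgradAt u x p → p ∈ closure Ω₂
  r2 : ∀ y p, SubgradAt v y p → p ∈ closure Ω₁
  y1 : ∀ x, ∀ y ∈ closure Ω₂, ⟪x, y⟫ ≤ u x + v y
  y2 : ∀ x p, SubgradAt u x p → u x + v p = ⟪x, p⟫
  y3 : ∀ x ∈ closure Ω₁, ∀ y, ⟪x, y⟫ ≤ u x + v y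
  y4 : ∀ x y, SubgradAt v y x → u x + v y = ⟪x, y⟫
  sec1 : SecProp u Ω₁
  sec2 : SecProp v Ω₂

namespace OTPair

variable {u v : R2 → ℝ} {Ω₁ Ω₂ : Set R2}

lemma swap (P : OTPair u v Ω₁ Ω₂) : OTPair v u Ω₂ Ω₁ where
  cu := P.cv
  cv := P.cu
  c1 := P.c2
  c2 := P.c1
  i1 := P.i2
  i2 := P.i1
  z1 := P.z2
  z2 := P.z1
  alex1 := P.alex2
  alex2 := P.alex1
  u0 := P.v0
  v0 := P.u0
  su := P.sv
  sv := P.su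
  r1 := P.r2
  r2 := P.r1
  y1 := fun x y hy => by rw [real_inner_comm, add_comm]; exact P.y3 y hy x
  y2 := fun x p hp => by rw [real_inner_comm, add_comm]; exact P.y4 p x hp
  y3 := fun x hx y => by rw [real_inner_comm, add_comm]; exact P.y1 y x hx
  y4 := fun x y h => by rw [real_inner_comm, add_comm]; exact P.y2 y x h
  sec1 := P.sec2
  sec2 := P.sec1

lemma nonneg (P : OTPair u v Ω₁ Ω₂) (x : R2) : 0 ≤ u x := by
  have := P.su x
  simpa [P.u0] using this

/-- If an interior point of the target is a slope at `x`, then `x` is a dual slope. -/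
lemma dual_subgradAt_of_interior (P : OTPair u v Ω₁ Ω₂) {x p : R2} (h : SubgradAt u x p)
    (hp : p ∈ interior Ω₂) : SubgradAt v p x := by
  refine subgradAt_of_local P.cv ⟨interior Ω₂, isOpen_interior.mem_nhds hp, fun y hy => ?_⟩
  have h1 := P.y2 x p h
  have h2 := P.y1 x y (subset_closure (interior_subset hy))
  rw [inner_sub_right]
  linarith

lemma mem_closure_of_slope_interior (P : OTPair u v Ω₁ Ω₂) {x p : R2} (h : SubgradAt u x p)
    (hp : p ∈ interior Ω₂) : x ∈ closure Ω₁ :=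
  P.r2 _ _ (P.dual_subgradAt_of_interior h hp)

end OTPair

/-! ### Centred sections -/

/-- A bounded symmetric convex body. -/
structure IsSymmBody (E : Set R2) : Prop where
  convex : Convex ℝ E
  symm : ∀ z ∈ E, -z ∈ E
  meas : MeasurableSet E
  bdd : Bornology.IsBounded E
  pos : volume E ≠ 0

lemma IsSymmBody.smul_mem {E : Set R2} (hE : IsSymmBody E) {z : R2} (hz : z ∈ E) {c : ℝ}
    (h0 : 0 ≤ c) (hc : c ≤ 1) : c • z ∈ E := by
  have := hE.convex hz (hE.symm z hz) (a := (1 + c) / 2) (b := (1 - c) / 2) (by linarith)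
    (by linarith) (by ring)
  convert this using 1
  module

lemma IsSymmBody.volume_lt_top {E : Set R2} (hE : IsSymmBody E) : volume E < ⊤ :=
  hE.bdd.measure_lt_top

open scoped Pointwise in
lemma volume_affine_image (E : Set R2) (x : R2) {δ : ℝ} (hδ : 0 ≤ δ) :
    volume ((fun z => x + δ • z) '' E) = ENNReal.ofReal (δ ^ 2) * volume E := by
  have : (fun z => x + δ • z) '' E = (fun z => x + z) '' (δ • E) := by
    rw [← image_smul, image_image]
  rw [this, image_add_left, measure_preimage_add, Measure.addHaar_smul]
  simp [abs_of_nonneg hδ]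

/-- An affine function nonnegative on a centred section is bounded on the reference body. -/
lemma abs_le_of_nonneg_on_section {E S : Set R2} (hE : IsSymmBody E) {δ : ℝ} (hδ : 0 < δ)
    {xh : R2} (hT : (fun z => xh + δ • z) '' E ⊆ S) (hS : S ⊆ (fun z => δ⁻¹ • z) '' E)
    (hSm : MeasurableSet S) (hc : ∫ x in S, x = 0) (g : R2 →L[ℝ] ℝ)
    (hg : ∀ x ∈ S, 0 ≤ 1 + g x) {z : R2} (hz : z ∈ E) : |g z| ≤ (δ⁻¹) ^ 5 := by
  have hSb : Bornology.IsBounded S := by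
    refine Bornology.IsBounded.subset ?_ hS
    exact hE.bdd.smul₀ δ⁻¹
  have hintg : ∀ f : R2 → ℝ, Continuous f → IntegrableOn f S := by
    intro f hf
    exact (hf.continuousOn.integrableOn_compact hSb.isCompact_closure).mono_set subset_closure
  have hintegr_id : IntegrableOn (fun x : R2 => x) S :=
    (continuous_id.continuousOn.integrableOn_compact hSb.isCompact_closure).mono_set
      subset_closure
  set T := (fun z => xh + δ • z) '' E with hTdef
  have hTm : MeasurableSet T := by
    have : T = (fun y => δ⁻¹ • (y - xh)) ⁻¹' E := by
      ext y
      constructor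
      · rintro ⟨w, hw, rfl⟩
        simpa [smul_smul, hδ.ne'] using hw
      · intro hy
        exact ⟨_, hy, by simp [smul_smul, hδ.ne']⟩
    rw [this]
    exact hE.meas.preimage (by fun_prop)
  have hTsymm : ∀ y, (2 : ℝ) • xh - y ∈ T ↔ y ∈ T := by
    have : ∀ y, y ∈ T → (2 : ℝ) • xh - y ∈ T := by
      rintro _ ⟨w, hw, rfl⟩
      exact ⟨-w, hE.symm w hw, by module⟩
    intro y
    refine ⟨fun h => ?_, this y⟩
    have h2 := this _ h
    convert h2 using 1
    module
  have hTint : ∫ x in T, g (x - xh) = 0 := by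
    rw [← integral_indicator hTm]
    have h1 := integral_sub_left_eq_self (T.indicator fun x => g (x - xh)) volume ((2 : ℝ) • xh)
    have h2 : ∀ x, T.indicator (fun x => g (x - xh)) ((2 : ℝ) • xh - x) =
        - T.indicator (fun x => g (x - xh)) x := by
      intro x
      by_cases hx : x ∈ T
      · rw [indicator_of_mem ((hTsymm x).2 hx), indicator_of_mem hx, ← map_neg]
        congr 1
        module
      · rw [indicator_of_notMem (fun h => hx ((hTsymm x).1 h)), indicator_of_notMem hx, neg_zero]
    simp_rw [h2] at h1
    rw [integral_neg] at h1
    linarith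
  set m := (volume E).toReal with hm
  have hmpos : 0 < m := ENNReal.toReal_pos hE.pos hE.volume_lt_top.ne
  have hTvol : volume.real T = δ ^ 2 * m := by
    rw [Measure.real, hTdef, volume_affine_image E xh hδ.le, ENNReal.toReal_mul,
      ENNReal.toReal_ofReal (by positivity)]
  have hSvol : volume.real S ≤ (δ⁻¹) ^ 2 * m := by
    have h1 : volume S ≤ ENNReal.ofReal ((δ⁻¹) ^ 2) * volume E := by
      refine (measure_mono hS).trans (le_of_eq ?_)
      have := volume_affine_image E 0 (inv_pos.2 hδ).le
      simpa using this
    have h2 := ENNReal.toReal_mono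
      (ENNReal.mul_ne_top ENNReal.ofReal_ne_top hE.volume_lt_top.ne) h1
    rwa [ENNReal.toReal_mul, ENNReal.toReal_ofReal (by positivity)] at h2
  have hSfin : volume S ≠ ⊤ := hSb.measure_lt_top.ne
  have hTfin : volume T ≠ ⊤ := (measure_mono hT).trans_lt hSb.measure_lt_top |>.ne
  have hgc : Continuous fun x => g x := g.continuous
  have hSI : ∫ x in S, (1 + g x) = volume.real S := by
    rw [integral_add (hintg _ continuous_const) (hintg _ hgc), g.integral_comp_comm hintegr_id, hc]
    simp
  have hTI : ∫ x in T, (1 + g x) = (1 + g xh) * volume.real T := by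
    have e : ∀ x, 1 + g x = (1 + g xh) + g (x - xh) := by intro x; rw [map_sub]; ring
    rw [setIntegral_congr_fun hTm fun x _ => e x]
    rw [integral_add (f := fun _ => 1 + g xh) ((hintg _ continuous_const).mono_set hT)
      ((hintg _ (by fun_prop)).mono_set hT), hTint]
    simp [mul_comm]
  have hmono : ∫ x in T, (1 + g x) ≤ ∫ x in S, (1 + g x) := by
    refine setIntegral_mono_set (hintg _ (by fun_prop)) ?_ (Filter.Eventually.of_forall hT)
    exact (ae_restrict_iff' hSm).2 (Filter.Eventually.of_forall hg)
  rw [hSI, hTI, hTvol] at hmono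
  have h1 : (1 + g xh) * δ ^ 2 ≤ (δ⁻¹) ^ 2 := by
    have : (1 + g xh) * δ ^ 2 * m ≤ (δ⁻¹) ^ 2 * m := by linarith
    exact le_of_mul_le_mul_right this hmpos
  have h2 : 1 + g xh ≤ (δ⁻¹) ^ 4 := by
    have e : (δ⁻¹) ^ 4 = (δ⁻¹) ^ 2 / δ ^ 2 := by field_simp
    rw [e, le_div_iff₀ (by positivity)]
    exact h1
  have h3 := hg _ (hT ⟨z, hz, rfl⟩)
  have h4 := hg _ (hT ⟨-z, hE.symm z hz, rfl⟩)
  simp only [map_add, map_smul, map_neg, smul_eq_mul] at h3 h4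
  have e5 : (δ⁻¹) ^ 5 = (δ⁻¹) ^ 4 / δ := by field_simp
  rw [e5, le_div_iff₀ hδ, ← abs_of_pos hδ, ← abs_mul, abs_of_pos hδ, abs_le]
  constructor <;> linarith

section Section

variable {u : R2 → ℝ} {E S : Set R2} {δ h : ℝ} {xh p : R2}

lemma section_bound (hu0 : ∀ x, 0 ≤ u x) (hE : IsSymmBody E) (hδ : 0 < δ) (hh : 0 < h)
    (hT : (fun z => xh + δ • z) '' E ⊆ S) (hS : S ⊆ (fun z => δ⁻¹ • z) '' E)
    (hSm : MeasurableSet S) (hc : ∫ x in S, x = 0) (hSd : S = {x | u x < ⟪p, x⟫ + h})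
    {x : R2} (hx : x ∈ S) : u x ≤ (1 + (δ⁻¹) ^ 6) * h := by
  obtain ⟨z, hz, rfl⟩ := hS hx
  have := abs_le_of_nonneg_on_section hE hδ hT hS hSm hc (h⁻¹ • innerSL ℝ p) (by
    intro y hy
    rw [hSd] at hy
    simp only [mem_ofPred_eq] at hy
    have := hu0 y
    simp only [smul_apply, innerSL_apply_apply, smul_eq_mul]
    have e : 1 + h⁻¹ * ⟪p, y⟫ = h⁻¹ * (⟪p, y⟫ + h) := by field_simp; ring
    rw [e]
    have : 0 ≤ ⟪p, y⟫ + h := by linarith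
    positivity) hz
  simp only [smul_apply, innerSL_apply_apply, smul_eq_mul] at this
  have h2 := (abs_le.1 this).2
  rw [inv_mul_le_iff₀ hh] at h2
  rw [hSd] at hx
  simp only [mem_ofPred_eq, real_inner_smul_right] at hx
  have h3 := mul_le_mul_of_nonneg_left h2 (inv_pos.2 hδ).le
  have e : δ⁻¹ * (h * δ⁻¹ ^ 5) = δ⁻¹ ^ 6 * h := by ring
  linarith

lemma smul_body_subset_section (hu : ConvexOn ℝ univ u) (hu0 : u 0 = 0) (hE : IsSymmBody E)
    (hδ : 0 < δ) (hh : 0 < h)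
    (hT : (fun z => xh + δ • z) '' E ⊆ S) (hS : S ⊆ (fun z => δ⁻¹ • z) '' E)
    (hSm : MeasurableSet S) (hc : ∫ x in S, x = 0) (hSd : S = {x | u x < ⟪p, x⟫ + h})
    {z : R2} (hz : z ∈ E) : (δ ^ 5 / 2) • z ∈ S := by
  by_contra hx
  have hcont := convex_continuous hu
  have hSo : IsOpen S := by
    rw [hSd]
    exact isOpen_lt hcont (by fun_prop)
  have hSc : Convex ℝ S := by
    rw [hSd]
    have h1 : ConvexOn ℝ univ (fun y => u y + (-(innerSL ℝ p)) y) :=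
      hu.add ((-(innerSL ℝ p)).toLinearMap.convexOn convex_univ)
    have e : {x | u x < ⟪p, x⟫ + h} = {y ∈ univ | u y + (-(innerSL ℝ p)) y < h} := by
      refine Set.ext fun y => ?_
      simp only [mem_ofPred_eq, mem_univ, true_and, neg_apply, innerSL_apply_apply]
      constructor <;> intro <;> linarith
    rw [e]
    exact h1.convex_lt h
  obtain ⟨F, hF⟩ := geometric_hahn_banach_open_point hSc hSo hx
  have h0 : (0 : R2) ∈ S := by
    rw [hSd]; simp [hu0, hh]
  have hpos := hF 0 h0
  rw [map_zero] at hpos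
  set a := F ((δ ^ 5 / 2) • z) with ha
  have := abs_le_of_nonneg_on_section hE hδ hT hS hSm hc (-(a⁻¹ • F)) (by
    intro y hy
    have := hF y hy
    simp only [neg_apply, smul_apply, smul_eq_mul]
    have e : 1 + -(a⁻¹ * F y) = a⁻¹ * (a - F y) := by field_simp; ring
    rw [e]
    have : 0 ≤ a - F y := by linarith
    positivity) hz
  simp only [neg_apply, smul_apply, smul_eq_mul, abs_neg] at this
  have hFz : F z = 2 * (δ⁻¹) ^ 5 * a := by
    rw [ha, map_smul, smul_eq_mul]; field_simp
  rw [hFz] at this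
  have e : a⁻¹ * (2 * δ⁻¹ ^ 5 * a) = 2 * δ⁻¹ ^ 5 := by field_simp
  have hδ5 : 0 < δ⁻¹ ^ 5 := by positivity
  rw [e, abs_of_pos (by positivity)] at this
  linarith

end Section

lemma exists_orthonormalBasis_pair {e f : R2} (he : ‖e‖ = 1) (hf : ‖f‖ = 1) (hef : ⟪e, f⟫ = 0) :
    ∃ b : OrthonormalBasis (Fin 2) ℝ R2, b 0 = e ∧ b 1 = f := by
  have ho : Orthonormal ℝ ![e, f] := by
    rw [orthonormal_iff_ite]
    intro i j
    fin_cases i <;> fin_cases j <;>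
      simp [hef, real_inner_comm e f, he, hf]
  have hc : Fintype.card (Fin 2) = Module.finrank ℝ R2 := by simp
  let b := basisOfOrthonormalOfCardEqFinrank ho hc
  have hb : (b : Fin 2 → R2) = ![e, f] := coe_basisOfOrthonormalOfCardEqFinrank ho hc
  refine ⟨b.toOrthonormalBasis (by rw [hb]; exact ho), ?_, ?_⟩ <;> simp [hb]

lemma norm_sq_eq_of_orthonormal {e f : R2} (he : ‖e‖ = 1) (hf : ‖f‖ = 1) (hef : ⟪e, f⟫ = 0)
    (x : R2) : ‖x‖ ^ 2 = ⟪x, e⟫ ^ 2 + ⟪x, f⟫ ^ 2 := by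
  obtain ⟨b, rfl, rfl⟩ := exists_orthonormalBasis_pair he hf hef
  have := b.sum_sq_norm_inner_right x
  rw [Fin.sum_univ_two] at this
  simp only [Real.norm_eq_abs, sq_abs] at this
  rw [← this, real_inner_comm, real_inner_comm (b 1)]

lemma isSymmBody_ellipse {e f : R2} (he : ‖e‖ = 1) (hf : ‖f‖ = 1) (hef : ⟪e, f⟫ = 0) {L l : ℝ}
    (hL : 0 < L) (hl : 0 < l) : IsSymmBody (ellipse e f L l) where
  convex := by
    have h1 : ∀ (g : R2) (c : ℝ), ConvexOn ℝ univ (fun x : R2 => (⟪x, g⟫ / c) ^ 2) := by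
      intro g c
      have := (even_two.convexOn_pow (𝕜 := ℝ)).comp_linearMap (c⁻¹ • (innerSL ℝ g)).toLinearMap
      rw [preimage_univ] at this
      refine this.congr fun x _ => ?_
      simp [real_inner_comm x g, div_eq_inv_mul]
    have := ((h1 e L).add (h1 f l)).convex_le 1
    simpa [ellipse] using this
  symm := by
    intro z hz
    simp only [ellipse, mem_ofPred_eq, inner_neg_left, neg_div, neg_sq] at hz ⊢
    exact hz
  meas := by
    refine IsClosed.measurableSet (isClosed_le ?_ continuous_const)
    fun_prop
  bdd := by
    refine (isBounded_closedBall (x := (0 : R2)) (r := L + l)).subset fun x hx => ?_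
    simp only [ellipse, mem_ofPred_eq, div_pow] at hx
    rw [mem_closedBall_zero_iff]
    have h := norm_sq_eq_of_orthonormal he hf hef x
    have a1 : ⟪x, e⟫ ^ 2 ≤ L ^ 2 := by
      have : ⟪x, e⟫ ^ 2 / L ^ 2 ≤ 1 := by
        have : 0 ≤ ⟪x, f⟫ ^ 2 / l ^ 2 := by positivity
        linarith
      rwa [div_le_one (by positivity)] at this
    have a2 : ⟪x, f⟫ ^ 2 ≤ l ^ 2 := by
      have : ⟪x, f⟫ ^ 2 / l ^ 2 ≤ 1 := by
        have : 0 ≤ ⟪x, e⟫ ^ 2 / L ^ 2 := by positivity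
        linarith
      rwa [div_le_one (by positivity)] at this
    refine abs_le_of_sq_le_sq' ?_ (by positivity) |>.2
    nlinarith [mul_pos hL hl]
  pos := by
    have hcont : Continuous fun x : R2 => (⟪x, e⟫ / L) ^ 2 + (⟪x, f⟫ / l) ^ 2 := by fun_prop
    have ho : IsOpen {x : R2 | (⟪x, e⟫ / L) ^ 2 + (⟪x, f⟫ / l) ^ 2 < 1} :=
      isOpen_lt hcont continuous_const
    have := ho.measure_pos volume ⟨0, by simp⟩
    refine (this.trans_le (measure_mono fun x hx => ?_)).ne'
    exact le_of_lt (mem_ofPred_eq ▸ hx : _ < _)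

/-- The hypothesis on the sections of one potential and its dual at a given height. -/
def SectionData (δ : ℝ) (w : R2 → ℝ) (Ω : Set R2) (h : ℝ) (E : Set R2) : Prop :=
  ∃ S : Set R2, IsCentredSection w 0 h S ∧
    (∃ xh : R2, (fun z => xh + δ • z) '' E ⊆ Ω ∩ S) ∧ S ⊆ (fun z => δ⁻¹ • z) '' E

lemma SectionData.unpack {δ : ℝ} {w : R2 → ℝ} {Ω : Set R2} {h : ℝ} {E : Set R2}
    (H : SectionData δ w Ω h E) (hw : ConvexOn ℝ univ w) (hw0 : w 0 = 0) :
    ∃ (S : Set R2) (xh p : R2), S = {x | w x < ⟪p, x⟫ + h} ∧ MeasurableSet S ∧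
      ∫ x in S, x = 0 ∧ (fun z => xh + δ • z) '' E ⊆ Ω ∧ (fun z => xh + δ • z) '' E ⊆ S ∧
      S ⊆ (fun z => δ⁻¹ • z) '' E := by
  obtain ⟨S, ⟨p, hS, hc⟩, ⟨xh, hT⟩, hSE⟩ := H
  simp only [hw0, sub_zero, zero_add] at hS hc
  refine ⟨S, xh, p, hS, ?_, hc, hT.trans inter_subset_left, hT.trans inter_subset_right, hSE⟩
  rw [hS]
  exact (isOpen_lt (convex_continuous hw) (by fun_prop)).measurableSet

lemma secProp_of_sections {u v : R2 → ℝ} {Ω₁ Ω₂ : Set R2} {δ : ℝ} (hδ : 0 < δ)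
    (hu : ConvexOn ℝ univ u) (hv : ConvexOn ℝ univ v) (hu0 : u 0 = 0) (hv0 : v 0 = 0)
    (hun : ∀ x, 0 ≤ u x) (hvn : ∀ x, 0 ≤ v x)
    (hy3 : ∀ x ∈ closure Ω₁, ∀ y, ⟪x, y⟫ ≤ u x + v y)
    (H : ∀ h : ℝ, 0 < h → h ≤ 1 → ∃ (e f : R2) (L l : ℝ), ‖e‖ = 1 ∧ ‖f‖ = 1 ∧ ⟪e, f⟫ = 0 ∧
      0 < L ∧ 0 < l ∧ L * l = h ∧ SectionData δ u Ω₁ h (ellipse e f L l) ∧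
      SectionData δ v Ω₂ h (ellipse f e L l)) : SecProp u Ω₁ := by
  set μ : ℝ := min (δ ^ 5 / 2) δ with hμdef
  have hμ : 0 < μ := lt_min (by positivity) hδ
  have hμ1 : μ ≤ δ ^ 5 / 2 := min_le_left _ _
  have hμ2 : μ ≤ δ := min_le_right _ _
  set C2 : ℝ := 2 + (δ⁻¹) ^ 6 with hC2
  set C3 : ℝ := (δ⁻¹) ^ 5 * C2 with hC3
  have hC2p : 0 < C2 := by positivity
  have hC3p : 0 < C3 := by positivity
  set C : ℝ := 1 + C2 + 2 * δ⁻¹ / μ + 2 * C3 / μ with hC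
  have hCa : 2 * δ⁻¹ / μ ≤ C := by
    have : 0 < 2 * C3 / μ := by positivity
    linarith
  have hCb : 2 * C3 / μ ≤ C := by
    have : 0 < 2 * δ⁻¹ / μ := by positivity
    linarith
  have hCc : C2 ≤ C := by
    have : 0 < 2 * δ⁻¹ / μ := by positivity
    have : 0 < 2 * C3 / μ := by positivity
    linarith
  have hC1 : 1 ≤ C := by
    have : 0 < 2 * δ⁻¹ / μ := by positivity
    have : 0 < 2 * C3 / μ := by positivity
    linarith
  have hCp : 0 < C := by linarith
  refine ⟨C, hC1, fun h hh hh1 => ?_⟩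
  obtain ⟨e, f, L, l, he, hf, hef, hL, hl, hLl, Hu, Hv⟩ := H h hh hh1
  have hfe : ⟪f, e⟫ = 0 := by rw [real_inner_comm]; exact hef
  have hE := isSymmBody_ellipse he hf hef hL hl
  have hF := isSymmBody_ellipse hf he hfe hL hl
  obtain ⟨S, xh, p, hSd, hSm, hSc, hTΩ, hTS, hSE⟩ := Hu.unpack hu hu0
  obtain ⟨S', yh, p', hSd', hSm', hSc', -, hTS', hSE'⟩ := Hv.unpack hv hv0
  set E := ellipse e f L l with hEdef
  have hbound : ∀ x ∈ S, u x ≤ C * h := by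
    intro x hx
    have := section_bound hun hE hδ hh hTS hSE hSm hSc hSd hx
    nlinarith
  have hscale : ∀ z ∈ E, ∀ a : ℝ, 0 ≤ a → a ≤ C * μ → ∀ x, x = a • z →
      C⁻¹ • x ∈ (fun z => μ • z) '' E := by
    rintro z hz a ha haC x rfl
    refine ⟨(a / (C * μ)) • z, hE.smul_mem hz (by positivity) ?_, ?_⟩
    · rw [div_le_one (by positivity)]; exact haC
    · simp only [smul_smul]
      congr 1
      field_simp
  refine ⟨(fun z => μ • z) '' E, xh, ?_, ?_, ?_, ?_, ?_, ?_⟩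
  · exact hE.convex.smul μ
  · rintro _ ⟨z, hz, rfl⟩
    exact ⟨-z, hE.symm z hz, by simp⟩
  · rintro _ ⟨z, hz, rfl⟩
    refine hbound _ ?_
    have hz' := hE.smul_mem hz (c := μ / (δ ^ 5 / 2)) (by positivity)
      (by rw [div_le_one (by positivity)]; exact hμ1)
    have := smul_body_subset_section hu hu0 hE hδ hh hTS hSE hSm hSc hSd hz'
    rwa [smul_smul, mul_div_cancel₀ _ (by positivity)] at this
  · rintro _ ⟨z, hz, rfl⟩
    have hz' := hE.smul_mem hz (c := μ / δ) (by positivity)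
      (by rw [div_le_one (by positivity)]; exact hμ2)
    have hmem : xh + μ • z ∈ (fun z => xh + δ • z) '' E :=
      ⟨_, hz', by simp only [smul_smul]; rw [mul_div_cancel₀ _ hδ.ne']⟩
    exact ⟨hTΩ hmem, hbound _ (hTS hmem)⟩
  · intro x hx hxh
    have hFL : ∀ z ∈ ellipse f e L l, |⟪x, z⟫| ≤ C3 * h := by
      intro z hz
      have := abs_le_of_nonneg_on_section hF hδ hTS' hSE' hSm' hSc'
        (-((C2 * h)⁻¹ • innerSL ℝ x)) (by
        intro y hy
        have h1 := section_bound hvn hF hδ hh hTS' hSE' hSm' hSc' hSd' hy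
        have h2 := hy3 x hx y
        simp only [neg_apply, smul_apply, smul_eq_mul, innerSL_apply_apply]
        have : (C2 * h)⁻¹ * ⟪x, y⟫ ≤ 1 := by
          rw [inv_mul_le_iff₀ (by positivity)]
          rw [hC2]; linarith
        linarith) hz
      simp only [neg_apply, smul_apply, smul_eq_mul, innerSL_apply_apply, abs_neg, abs_mul,
        abs_inv] at this
      rw [abs_of_pos hC2p, abs_of_pos hh, inv_mul_le_iff₀ (by positivity)] at this
      rw [hC3]; linarith
    have h1 := hFL (l • e) (by
      simp [ellipse, real_inner_smul_left, hef, he, hl.ne'])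
    have h2 := hFL (L • f) (by
      simp [ellipse, real_inner_smul_left, hfe, hf, hL.ne'])
    rw [real_inner_smul_right, abs_mul, abs_of_pos hl, ← hLl] at h1
    rw [real_inner_smul_right, abs_mul, abs_of_pos hL, ← hLl] at h2
    have h1' : |⟪x, e⟫| ≤ C3 * L := by
      have : l * |⟪x, e⟫| ≤ l * (C3 * L) := by linarith
      exact le_of_mul_le_mul_left this hl
    have h2' : |⟪x, f⟫| ≤ C3 * l := by
      have : L * |⟪x, f⟫| ≤ L * (C3 * l) := by linarith
      exact le_of_mul_le_mul_left this hL
    refine hscale ((2 * C3)⁻¹ • x) ?_ (2 * C3) (by positivity) ?_ x ?_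
    · simp only [hEdef, ellipse, mem_ofPred_eq, real_inner_smul_left]
      have a1 : ((2 * C3)⁻¹ * ⟪x, e⟫ / L) ^ 2 ≤ (1 / 2) ^ 2 := by
        refine sq_le_sq' ?_ ?_
        all_goals
          have := abs_le.1 h1'
          have e1 : (2 * C3)⁻¹ * ⟪x, e⟫ / L = ⟪x, e⟫ / (2 * (C3 * L)) := by field_simp
          rw [e1]
        · rw [le_div_iff₀ (by positivity)]; linarith
        · rw [div_le_iff₀ (by positivity)]; linarith
      have a2 : ((2 * C3)⁻¹ * ⟪x, f⟫ / l) ^ 2 ≤ (1 / 2) ^ 2 := by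
        refine sq_le_sq' ?_ ?_
        all_goals
          have := abs_le.1 h2'
          have e1 : (2 * C3)⁻¹ * ⟪x, f⟫ / l = ⟪x, f⟫ / (2 * (C3 * l)) := by field_simp
          rw [e1]
        · rw [le_div_iff₀ (by positivity)]; linarith
        · rw [div_le_iff₀ (by positivity)]; linarith
      norm_num at a1 a2 ⊢
      linarith
    · rwa [div_le_iff₀ hμ] at hCb
    · rw [smul_smul, mul_inv_cancel₀ (by positivity), one_smul]
  · have key : ∀ x, u x ≤ h → 0 ≤ ⟪p, x⟫ → C⁻¹ • x ∈ (fun z => μ • z) '' E := by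
      intro x hx hpx
      have hxS : (1 / 2 : ℝ) • x ∈ S := by
        rw [hSd]
        have := convex_smul_le hu hu0 x (a := 1 / 2) (by norm_num) (by norm_num)
        simp only [mem_ofPred_eq, real_inner_smul_right]
        linarith
      obtain ⟨z, hz, hzx⟩ := hSE hxS
      refine hscale z hz (2 * δ⁻¹) (by positivity) (by rwa [div_le_iff₀ hμ] at hCa) x ?_
      simp only at hzx
      rw [mul_smul, hzx, smul_smul]
      norm_num
    intro x hx hx'
    rcases le_total 0 ⟪p, x⟫ with h0 | h0
    · exact key x hx h0
    · obtain ⟨z, hz, hzx⟩ := key (-x) hx' (by rw [inner_neg_right]; linarith)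
      refine ⟨-z, hE.symm z hz, ?_⟩
      simp only at hzx
      simp only [smul_neg] at hzx ⊢
      rw [hzx, neg_neg]

lemma InSFamily.otPair {δ : ℝ} (hδ : 0 < δ) {u v : R2 → ℝ} {Ω₁ Ω₂ : Set R2} {L l : ℝ → ℝ}
    {e f : ℝ → R2} (H : InSFamily δ u v Ω₁ Ω₂ L l e f) : OTPair u v Ω₁ Ω₂ := by
  obtain ⟨cu, cv, c1, c2, i1, i2, z1, z2, g1, g2, A1, u0, su, A2, v0, sv, hleg, -, -, hsec⟩ := H
  have hun : ∀ x, 0 ≤ u x := fun x => by simpa [u0] using su x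
  have hvn : ∀ x, 0 ≤ v x := fun x => by simpa [v0] using sv x
  have r1 : ∀ x p, SubgradAt u x p → p ∈ closure Ω₂ :=
    fun x p hp => subgradAt_mem_closure cu c1 i2 g1 A1 su hp
  have r2 : ∀ x p, SubgradAt v x p → p ∈ closure Ω₁ :=
    fun x p hp => subgradAt_mem_closure cv c2 i1 g2 A2 sv hp
  have hr : ∀ q ∈ Ω₂, ∃ x, SubgradAt u x q := fun q hq =>
    let ⟨x, _, hx⟩ := exists_subgradAt_of_mem_image cu g1 su hq
    ⟨x, hx⟩
  have hr' : ∀ x ∈ Ω₁, ∃ y ∈ closure Ω₂, SubgradAt v y x := by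
    intro x hx
    obtain ⟨y, hy | rfl, hs⟩ := exists_subgradAt_of_mem_image cv g2 sv hx
    · exact ⟨y, subset_closure hy, hs⟩
    · exact ⟨0, frontier_subset_closure z2, hs⟩
  have y1 : ∀ x, ∀ y ∈ closure Ω₂, ⟪x, y⟫ ≤ u x + v y :=
    fun x y hy => young_of_mem_closure_target cv hr hleg x hy
  have y2 : ∀ x p, SubgradAt u x p → u x + v p = ⟪x, p⟫ :=
    fun x p hp => young_eq_of_subgradAt cv c2 i2 hr hleg hp (r1 x p hp)
  have y3 : ∀ x ∈ closure Ω₁, ∀ y, ⟪x, y⟫ ≤ u x + v y :=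
    fun x hx y => young_of_mem_closure_source cu y1 hr' hx y
  have y4 : ∀ x y, SubgradAt v y x → u x + v y = ⟪x, y⟫ :=
    fun x y h => young_eq_of_subgradAt_dual cu y2 y3 (r2 y x h) h
  have s1 : SecProp u Ω₁ := by
    refine secProp_of_sections (Ω₂ := Ω₂) hδ cu cv u0 v0 hun hvn y3 fun h hh hh1 => ?_
    obtain ⟨he, hf, hef, hl, hlL, hLl, hu', hv'⟩ := hsec h ⟨hh, hh1⟩
    exact ⟨e h, f h, L h, l h, he, hf, hef, hl.trans_le hlL, hl, hLl, hu', hv'⟩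
  have s2 : SecProp v Ω₂ := by
    refine secProp_of_sections (Ω₂ := Ω₁) hδ cv cu v0 u0 hvn hun
      (fun x hx y => by rw [real_inner_comm, add_comm]; exact y1 y x hx) fun h hh hh1 => ?_
    obtain ⟨he, hf, hef, hl, hlL, hLl, hu', hv'⟩ := hsec h ⟨hh, hh1⟩
    exact ⟨f h, e h, L h, l h, hf, he, by rw [real_inner_comm]; exact hef, hl.trans_le hlL, hl,
      hLl, hv', hu'⟩
  exact ⟨cu, cv, c1, c2, i1, i2, z1, z2, A1, A2, u0, v0, su, sv, r1, r2, y1, y2, y3, y4, s1, s2⟩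

/-! ### Strict convexity up to the boundary -/

lemma eq_of_orthonormal {e f : R2} (he : ‖e‖ = 1) (hf : ‖f‖ = 1) (hef : ⟪e, f⟫ = 0) (x : R2) :
    x = ⟪x, e⟫ • e + ⟪x, f⟫ • f := by
  obtain ⟨b, rfl, rfl⟩ := exists_orthonormalBasis_pair he hf hef
  have := b.sum_repr' x
  rw [Fin.sum_univ_two] at this
  rw [real_inner_comm, real_inner_comm (b 1)]
  exact this.symm

lemma volume_box {e f : R2} (he : ‖e‖ = 1) (hf : ‖f‖ = 1) (hef : ⟪e, f⟫ = 0) {I J : Set ℝ}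
    (hI : MeasurableSet I) (hJ : MeasurableSet J) :
    volume {x : R2 | ⟪x, e⟫ ∈ I ∧ ⟪x, f⟫ ∈ J} = volume I * volume J := by
  obtain ⟨b, rfl, rfl⟩ := exists_orthonormalBasis_pair he hf hef
  have h1 := (EuclideanSpace.volume_preserving_symm_measurableEquiv_toLp (Fin 2)).comp
    b.measurePreserving_repr
  have hset : {x : R2 | ⟪x, b 0⟫ ∈ I ∧ ⟪x, b 1⟫ ∈ J} =
      ((MeasurableEquiv.toLp 2 (Fin 2 → ℝ)).symm ∘ b.repr) ⁻¹' (univ.pi ![I, J]) := by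
    ext x
    simp [Set.mem_pi, Fin.forall_fin_two, b.repr_apply_apply, real_inner_comm]
  have hm : MeasurableSet (univ.pi ![I, J]) :=
    MeasurableSet.univ_pi fun i => by fin_cases i <;> assumption
  rw [hset, h1.measure_preimage hm.nullMeasurableSet, volume_pi_pi]
  simp [Fin.prod_univ_two]

lemma exists_orthogonal {e : R2} (he : ‖e‖ = 1) : ∃ ν : R2, ‖ν‖ = 1 ∧ ⟪e, ν⟫ = 0 := by
  refine ⟨!₂[-(e 1), e 0], ?_, ?_⟩
  · rw [EuclideanSpace.norm_eq, Fin.sum_univ_two] at he ⊢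
    rw [← he]
    simp [add_comm]
  · simp [PiLp.inner_apply, Fin.sum_univ_two]
    ring

/-- A direction transversal to `e` pointing to the side of an interior point. -/
lemma exists_orthogonal_toward {Ω : Set R2} (hi : (interior Ω).Nonempty) (m : R2) {e : R2}
    (he : ‖e‖ = 1) : ∃ ν : R2, ‖ν‖ = 1 ∧ ⟪e, ν⟫ = 0 ∧ ∃ w ∈ interior Ω, 0 < ⟪w - m, ν⟫ := by
  obtain ⟨ν, hν, heν⟩ := exists_orthogonal he
  obtain ⟨w, hw⟩ := hi
  have hne : ∃ w ∈ interior Ω, ⟪w - m, ν⟫ ≠ 0 := by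
    by_cases h : ⟪w - m, ν⟫ = 0
    · obtain ⟨r, hr, hb⟩ := Metric.isOpen_iff.1 isOpen_interior w hw
      refine ⟨w + (r / 2) • ν, hb ?_, ?_⟩
      · simp [norm_smul, hν, abs_of_pos hr]; linarith
      · have : w + (r / 2) • ν - m = (w - m) + (r / 2) • ν := by abel
        rw [this, inner_add_left, h, real_inner_smul_left, real_inner_self_eq_norm_sq, hν]
        simp [hr.ne']
    · exact ⟨w, hw, h⟩
  obtain ⟨w, hw, hne⟩ := hne
  rcases lt_or_gt_of_ne hne with h | h
  · exact ⟨-ν, by simpa using hν, by simpa using heν, w, hw, by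
      rw [inner_neg_right]; linarith⟩
  · exact ⟨ν, hν, heν, w, hw, h⟩

lemma false_of_flat_segment_coord {u : R2 → ℝ} (hu : ConvexOn ℝ univ u) {Ω : Set R2}
    (hΩ : Convex ℝ Ω) (hA : AlexandrovSol u Ω) {m e ν : R2} (he : ‖e‖ = 1) (hν : ‖ν‖ = 1)
    (heν : ⟪e, ν⟫ = 0) {ℓ : ℝ} (hℓ : 0 < ℓ)
    (hseg : ∀ s : ℝ, |s| ≤ 4 * ℓ → m + s • e ∈ closure Ω ∧ u (m + s • e) = u m)
    {w : R2} (hw : w ∈ closure Ω) (hwν : 0 < ⟪w - m, ν⟫) : False := by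
  have hνe : ⟪ν, e⟫ = 0 := by rw [real_inner_comm]; exact heν
  have hee : ⟪e, e⟫ = 1 := by rw [real_inner_self_eq_norm_sq, he]; norm_num
  have hνν : ⟪ν, ν⟫ = 1 := by rw [real_inner_self_eq_norm_sq, hν]; norm_num
  -- the extreme slope at the midpoint
  have hcm : IsCompact {p | SubgradAt u m p} := by
    have := (isCompact_subgrad hu (isCompact_singleton (x := m))).image continuous_snd
    convert this using 1
    ext p
    constructor
    · intro h; exact ⟨(m, p), ⟨rfl, h⟩, rfl⟩
    · rintro ⟨⟨x, q⟩, ⟨hx, hq⟩, rfl⟩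
      simp only [mem_singleton_iff] at hx
      subst hx
      exact hq
  obtain ⟨p, hp, hpmax⟩ := hcm.exists_isMaxOn (exists_subgradAt hu m)
    (f := fun q => ⟪q, ν⟫) (by fun_prop)
  set a := ⟪p, ν⟫ with ha
  have hpmax' : ∀ q, SubgradAt u m q → ⟪q, ν⟫ ≤ a := fun q hq => hpmax hq
  have hslope : ∀ s : ℝ, |s| ≤ 2 * ℓ → ∀ q, SubgradAt u (m + s • e) q →
      ⟪q, e⟫ = 0 ∧ SubgradAt u m q := by
    intro s hs q hq
    have hs' := abs_le.1 hs
    have h1 := hq (m + (s + ℓ) • e)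
    have h2 := hq (m + (s - ℓ) • e)
    rw [(hseg s (by linarith)).2, (hseg (s + ℓ) (by rw [abs_le]; constructor <;> linarith)).2] at h1
    rw [(hseg s (by linarith)).2, (hseg (s - ℓ) (by rw [abs_le]; constructor <;> linarith)).2] at h2
    have e1 : m + (s + ℓ) • e - (m + s • e) = ℓ • e := by module
    have e2 : m + (s - ℓ) • e - (m + s • e) = (-ℓ) • e := by module
    rw [e1, real_inner_smul_right] at h1
    rw [e2, real_inner_smul_right] at h2
    have hz : ⟪q, e⟫ = 0 := by nlinarith
    refine ⟨hz, fun y => ?_⟩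
    have h3 := hq y
    rw [(hseg s (by linarith)).2] at h3
    have e3 : y - (m + s • e) = (y - m) - s • e := by abel
    rw [e3, inner_sub_right, real_inner_smul_right, hz] at h3
    linarith
  have hpe : ⟪p, e⟫ = 0 := (hslope 0 (by simp; linarith) p (by simpa using hp)).1
  set ω : ℝ := ℓ / 2 with hω
  have hωp : 0 < ω := by positivity
  have hK : IsCompact ((fun s : ℝ => m + s • e) '' Icc (-(2 * ℓ)) (2 * ℓ)) :=
    isCompact_Icc.image (by fun_prop)
  obtain ⟨ρ, hρ, husc⟩ := subgrad_usc hu hK (G := {q | ⟪q, ν⟫ < a + ω})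
    (isOpen_lt (by fun_prop) continuous_const) (by
      rintro _ ⟨s, hs, rfl⟩ q hq
      have := hpmax' q (hslope s (abs_le.2 hs) q hq).2
      simp only [mem_ofPred_eq]
      linarith)
  have hq1 : ∀ s t : ℝ, |s| ≤ 2 * ℓ → 0 < t → t ≤ ρ → ∀ q, SubgradAt u (m + s • e + t • ν) q →
      a ≤ ⟪q, ν⟫ ∧ ⟪q, ν⟫ < a + ω := by
    intro s t hs ht htρ q hq
    constructor
    · have h1 : SubgradAt u (m + s • e) p := by
        intro y
        have := hp y
        rw [(hseg s (by linarith)).2]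
        have e3 : y - (m + s • e) = (y - m) - s • e := by abel
        rw [e3, inner_sub_right, real_inner_smul_right, hpe]
        linarith
      have h2 := h1.mono hq
      have e1 : m + s • e + t • ν - (m + s • e) = t • ν := by abel
      rw [e1, real_inner_smul_right, inner_sub_left] at h2
      have := nonneg_of_mul_nonneg_right h2 ht
      linarith
    · refine husc (m + s • e) ⟨s, abs_le.1 hs, rfl⟩ _ ?_ q hq
      simp [dist_eq_norm, norm_smul, hν, abs_of_pos ht, htρ]
  have hub : ∀ s t : ℝ, |s| ≤ 2 * ℓ → 0 < t → t ≤ ρ →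
      u m + a * t ≤ u (m + s • e + t • ν) ∧ u (m + s • e + t • ν) ≤ u m + (a + ω) * t := by
    intro s t hs ht htρ
    constructor
    · have := hp (m + s • e + t • ν)
      have e1 : m + s • e + t • ν - m = s • e + t • ν := by abel
      rw [e1, inner_add_right, real_inner_smul_right, real_inner_smul_right, hpe] at this
      linarith
    · obtain ⟨q, hq⟩ := exists_subgradAt hu (m + s • e + t • ν)
      have h1 := (hq1 s t hs ht htρ q hq).2
      have h2 := hq (m + s • e)
      have e1 : m + s • e - (m + s • e + t • ν) = (-t) • ν := by module
      rw [(hseg s (by linarith)).2, e1, real_inner_smul_right] at h2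
      nlinarith
  -- a thin rectangle
  set α := ⟪w - m, e⟫ with hα
  set β := ⟪w - m, ν⟫ with hβ
  have hwexp : w = m + α • e + β • ν := by
    have := eq_of_orthonormal he hν heν (w - m)
    rw [add_assoc, ← this]; abel
  set η : ℝ := min ρ (min (β / 2) (ℓ * β / (|α| + 1))) with hη
  have hηp : 0 < η := by positivity
  have hη1 : η ≤ ρ := min_le_left _ _
  have hη2 : η ≤ β / 2 := (min_le_right _ _).trans (min_le_left _ _)
  have hη3 : η * (|α| + 1) ≤ ℓ * β := by
    have : η ≤ ℓ * β / (|α| + 1) := (min_le_right _ _).trans (min_le_right _ _)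
    rwa [le_div_iff₀ (by positivity)] at this
  set R : Set R2 := {x | ⟪x, e⟫ ∈ Ioo (⟪m, e⟫ - ℓ) (⟪m, e⟫ + ℓ) ∧
    ⟪x, ν⟫ ∈ Ioo ⟪m, ν⟫ (⟪m, ν⟫ + η)} with hR
  have hRm : MeasurableSet R := by
    have h1 : IsOpen {x : R2 | ⟪x, e⟫ ∈ Ioo (⟪m, e⟫ - ℓ) (⟪m, e⟫ + ℓ)} :=
      isOpen_Ioo.preimage (by fun_prop)
    have h2 : IsOpen {x : R2 | ⟪x, ν⟫ ∈ Ioo ⟪m, ν⟫ (⟪m, ν⟫ + η)} :=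
      isOpen_Ioo.preimage (by fun_prop)
    exact (h1.inter h2).measurableSet
  have hRexp : ∀ x ∈ R, ∃ s t : ℝ, |s| ≤ ℓ ∧ 0 < t ∧ t ≤ η ∧ x = m + s • e + t • ν := by
    rintro x ⟨⟨h1, h2⟩, h3, h4⟩
    refine ⟨⟪x - m, e⟫, ⟪x - m, ν⟫, ?_, ?_, ?_, ?_⟩
    · rw [inner_sub_left, abs_le]; constructor <;> linarith
    · rw [inner_sub_left]; linarith
    · rw [inner_sub_left]; linarith
    · rw [add_assoc, ← eq_of_orthonormal he hν heν]; abel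
  have hRcl : R ⊆ closure Ω := by
    intro x hx
    obtain ⟨s, t, hs, ht, htη, rfl⟩ := hRexp x hx
    set θ := t / β with hθ
    have hθ0 : 0 < θ := by positivity
    have hθ1 : θ ≤ 1 / 2 := by rw [hθ, div_le_iff₀ hwν]; linarith
    have hθα : |θ * α| ≤ ℓ := by
      rw [abs_mul, abs_of_pos hθ0, hθ, div_mul_eq_mul_div, div_le_iff₀ hwν]
      nlinarith [abs_nonneg α]
    have hs' : |(s - θ * α) / (1 - θ)| ≤ 4 * ℓ := by
      rw [abs_div, abs_of_pos (by linarith : 0 < 1 - θ), div_le_iff₀ (by linarith)]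
      have := abs_sub s (θ * α)
      nlinarith
    have hmem := hΩ.closure hw (hseg _ hs').1 hθ0.le (by linarith : 0 ≤ 1 - θ) (by ring)
    convert hmem using 1
    rw [hwexp]
    have e1 : (1 - θ) • (m + ((s - θ * α) / (1 - θ)) • e) = (1 - θ) • m + (s - θ * α) • e := by
      rw [smul_add, smul_smul, mul_div_cancel₀ _ (by linarith)]
    have e2 : t = θ * β := by rw [hθ]; field_simp
    rw [e1, e2]
    module
  have hRvol : volume (R ∩ Ω) = ENNReal.ofReal (2 * ℓ * η) := by
    have h1 : volume R = ENNReal.ofReal (2 * ℓ * η) := by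
      rw [hR, volume_box he hν heν measurableSet_Ioo measurableSet_Ioo, Real.volume_Ioo,
        Real.volume_Ioo, ← ENNReal.ofReal_mul (by linarith)]
      congr 1; ring
    refine le_antisymm (h1 ▸ measure_mono inter_subset_left) ?_
    rw [← h1]
    have h2 : R ⊆ (R ∩ Ω) ∪ frontier Ω := by
      intro x hx
      by_cases hxΩ : x ∈ Ω
      · exact Or.inl ⟨hx, hxΩ⟩
      · exact Or.inr ⟨hRcl hx, fun h => hxΩ (interior_subset h)⟩
    refine (measure_mono h2).trans ((measure_union_le _ _).trans ?_)
    rw [hΩ.addHaar_frontier volume, add_zero]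
  have himg : (⋃ x ∈ R, {p : R2 | SubgradAt u x p}) ⊆
      {q | ⟪q, e⟫ ∈ Icc (-(ω * η / ℓ)) (ω * η / ℓ) ∧ ⟪q, ν⟫ ∈ Icc a (a + ω)} := by
    intro q hq
    obtain ⟨x, hx, hqx⟩ := mem_iUnion₂.1 hq
    obtain ⟨s, t, hs, ht, htη, rfl⟩ := hRexp x hx
    have hs1 := abs_le.1 hs
    have htρ := htη.trans hη1
    have h1 := hq1 s t (by linarith) ht htρ q hqx
    have hb := hub s t (by linarith) ht htρ
    have hb1 := hub (s + ℓ) t (by rw [abs_le]; constructor <;> linarith) ht htρ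
    have hb2 := hub (s - ℓ) t (by rw [abs_le]; constructor <;> linarith) ht htρ
    have g1 := hqx (m + (s + ℓ) • e + t • ν)
    have g2 := hqx (m + (s - ℓ) • e + t • ν)
    have e1 : m + (s + ℓ) • e + t • ν - (m + s • e + t • ν) = ℓ • e := by module
    have e2 : m + (s - ℓ) • e + t • ν - (m + s • e + t • ν) = (-ℓ) • e := by module
    rw [e1, real_inner_smul_right] at g1
    rw [e2, real_inner_smul_right] at g2
    have hωt : ω * t ≤ ω * η := by gcongr
    refine ⟨⟨?_, ?_⟩, h1.1, h1.2.le⟩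
    · rw [neg_le, le_div_iff₀ hℓ]; nlinarith
    · rw [le_div_iff₀ hℓ]; nlinarith
  have hfin : ENNReal.ofReal (2 * ℓ * η) ≤ ENNReal.ofReal (2 * (ω * η / ℓ) * ω) := by
    rw [← hRvol, ← hA R hRm]
    refine (measure_mono himg).trans (le_of_eq ?_)
    rw [volume_box he hν heν measurableSet_Icc measurableSet_Icc, Real.volume_Icc,
        Real.volume_Icc, ← ENNReal.ofReal_mul (by
          have : 0 ≤ ω * η / ℓ := by positivity
          linarith)]
    congr 1; ring
  rw [ENNReal.ofReal_le_ofReal_iff (by positivity)] at hfin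
  have e1 : 2 * (ω * η / ℓ) * ω = ℓ * η / 2 := by rw [hω]; field_simp
  rw [e1] at hfin
  nlinarith [mul_pos hℓ hηp]

/-- An Alexandrov solution is not constant on a segment of the closed domain. -/
lemma false_of_flat_segment {u : R2 → ℝ} (hu : ConvexOn ℝ univ u) {Ω : Set R2}
    (hΩ : Convex ℝ Ω) (hi : (interior Ω).Nonempty) (hA : AlexandrovSol u Ω) {x₀ x₁ : R2}
    (h0 : x₀ ∈ closure Ω) (h1 : x₁ ∈ closure Ω) (hne : x₀ ≠ x₁)
    (hc : ∀ t : ℝ, 0 ≤ t → t ≤ 1 → u ((1 - t) • x₀ + t • x₁) = u x₀) : False := by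
  have hn : 0 < ‖x₁ - x₀‖ := norm_pos_iff.2 (sub_ne_zero.2 hne.symm)
  set n := ‖x₁ - x₀‖ with hndef
  set e := n⁻¹ • (x₁ - x₀) with hedef
  have he : ‖e‖ = 1 := by
    rw [hedef, norm_smul, norm_inv, norm_norm, ← hndef, inv_mul_cancel₀ hn.ne']
  set m := (1 / 2 : ℝ) • x₀ + (1 / 2 : ℝ) • x₁ with hm
  obtain ⟨ν, hν, heν, w, hw, hwν⟩ := exists_orthogonal_toward hi m he
  have hcm : u m = u x₀ := by
    have := hc (1 / 2) (by norm_num) (by norm_num)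
    rw [← this, hm]; norm_num
  refine false_of_flat_segment_coord hu hΩ hA he hν heν (ℓ := n / 8) (by positivity) ?_
    (subset_closure (interior_subset hw)) hwν
  intro s hs
  have hs' := abs_le.1 hs
  set t := 1 / 2 + s / n with ht
  have ht0 : 0 ≤ t := by
    have : -(1 / 2) ≤ s / n := by rw [le_div_iff₀ hn]; linarith
    linarith
  have ht1 : t ≤ 1 := by
    have : s / n ≤ 1 / 2 := by rw [div_le_iff₀ hn]; linarith
    linarith
  have hx : m + s • e = (1 - t) • x₀ + t • x₁ := by
    rw [hedef, hm, smul_smul, ← div_eq_mul_inv, ht]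
    module
  rw [hx]
  exact ⟨hΩ.closure h0 h1 (by linarith) ht0 (by ring), (hc t ht0 ht1).trans hcm.symm⟩

/-! ### Comparison with a linear change of variables -/

lemma det_adjoint (A : R2 →ₗ[ℝ] R2) : LinearMap.det (LinearMap.adjoint A) = LinearMap.det A := by
  let b := EuclideanSpace.basisFun (Fin 2) ℝ
  rw [← LinearMap.det_toMatrix b.toBasis, ← LinearMap.det_toMatrix b.toBasis,
    LinearMap.toMatrix_adjoint, Matrix.det_conjTranspose]
  simp

/-- Comparison principle for an Alexandrov solution and its composition with a linear map of
determinant one. -/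
lemma le_comp_linear_of_boundary {u : R2 → ℝ} (hu : ConvexOn ℝ univ u) {Ω : Set R2}
    (hA : AlexandrovSol u Ω) (A : R2 →ₗ[ℝ] R2) (hdet : LinearMap.det A = 1) {P : Set R2}
    (hPo : IsOpen P) (hPb : Bornology.IsBounded P) (hPΩ : ∀ x ∈ P, A x ∈ Ω → x ∈ Ω) {M : ℝ}
    (hbd : ∀ x ∈ closure P, x ∉ P → u x ≤ u (A x) + M) {x₀ : R2} (hx₀ : x₀ ∈ P)
    (hxi : x₀ ∈ interior Ω) : u x₀ ≤ u (A x₀) + M := by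
  by_contra! hlt
  have huc := convex_continuous hu
  have hAc : Continuous A := A.continuous_of_finiteDimensional
  set w : R2 → ℝ := fun x => u (A x) + M with hw
  have hwc : Continuous w := (huc.comp hAc).add continuous_const
  have hwconv : ConvexOn ℝ univ w := by
    have := hu.comp_linearMap A
    rw [preimage_univ] at this
    exact this.add (convexOn_const M convex_univ)
  have hPc : IsCompact (closure P) := hPb.isCompact_closure
  obtain ⟨z, hz, hzmax⟩ := hPc.exists_isMaxOn ⟨x₀, subset_closure hx₀⟩ huc.continuousOn
  set B := u z with hB
  have hBmax : ∀ x ∈ closure P, u x ≤ B := fun x hx => hzmax hx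
  obtain ⟨κ, hκ, hκlt⟩ : ∃ κ > 0, w x₀ < (1 + κ) * u x₀ - κ * B := by
    have hB0 := hBmax x₀ (subset_closure hx₀)
    refine ⟨(u x₀ - w x₀) / (2 * (B - u x₀ + 1)), div_pos (by linarith) (by linarith), ?_⟩
    set κ := (u x₀ - w x₀) / (2 * (B - u x₀ + 1)) with hκ
    have : κ * (2 * (B - u x₀ + 1)) = u x₀ - w x₀ := by
      rw [hκ, div_mul_cancel₀]; linarith
    have hκ0 : 0 < κ := div_pos (by linarith) (by linarith)
    nlinarith
  set U : R2 → ℝ := fun x => (1 + κ) * u x - κ * B with hU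
  have hUc : Continuous U := (huc.const_mul _).sub continuous_const
  have hUle : ∀ x ∈ closure P, U x ≤ u x := by
    intro x hx
    have := mul_le_mul_of_nonneg_left (hBmax x hx) hκ.le
    simp only [hU]; linarith
  set O : Set R2 := P ∩ {x | w x < U x} with hO
  have hOo : IsOpen O := hPo.inter (isOpen_lt hwc hUc)
  have hxO : x₀ ∈ O := ⟨hx₀, hκlt⟩
  have htouch : ∀ x ∈ O, ∀ p, SubgradAt u x p → ∃ y ∈ O, SubgradAt w y ((1 + κ) • p) := by
    intro x hx p hp
    obtain ⟨y, hy, hymin⟩ := hPc.exists_isMinOn ⟨x₀, subset_closure hx₀⟩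
      (f := fun y => w y - ⟪(1 + κ) • p, y⟫) (by fun_prop)
    have hymin' : ∀ y' ∈ closure P, w y - ⟪(1 + κ) • p, y⟫ ≤ w y' - ⟪(1 + κ) • p, y'⟫ :=
      fun y' hy' => hymin hy'
    have h1 := hymin' x (subset_closure hx.1)
    have h2 : w x < U x := hx.2
    have h3 := mul_le_mul_of_nonneg_left (hp y) (by linarith : 0 ≤ 1 + κ)
    rw [inner_sub_right] at h3
    rw [real_inner_smul_left, real_inner_smul_left] at h1
    have hyU : w y < U y := by
      simp only [hU] at h2 ⊢
      linarith
    have hyP : y ∈ P := by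
      by_contra hyP
      have h4 := hbd y hy hyP
      have h5 := hUle y hy
      simp only [hw] at hyU
      linarith
    refine ⟨y, ⟨hyP, hyU⟩, subgradAt_of_local hwconv ⟨P, hPo.mem_nhds hyP, fun y' hy' => ?_⟩⟩
    have := hymin' y' (subset_closure hy')
    rw [inner_sub_right]
    linarith
  have hdet0 : LinearMap.det A ≠ 0 := by rw [hdet]; norm_num
  let A' : R2 ≃ₗ[ℝ] R2 := A.equivOfDetNeZero hdet0
  have hA' : ∀ x, A' x = A x := fun x => rfl
  have hwsub : ∀ y p, SubgradAt w y p → ∃ q, SubgradAt u (A y) q ∧ LinearMap.adjoint A q = p := by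
    intro y p hp
    refine ⟨LinearMap.adjoint (A'.symm : R2 →ₗ[ℝ] R2) p, fun z => ?_, ?_⟩
    · have h1 := hp (A'.symm z)
      simp only [hw, ← hA', LinearEquiv.apply_symm_apply] at h1
      rw [LinearMap.adjoint_inner_left, map_sub]
      simp only [LinearEquiv.coe_coe, ← hA', LinearEquiv.symm_apply_apply]
      linarith
    · refine ext_inner_right ℝ fun z => ?_
      rw [LinearMap.adjoint_inner_left, LinearMap.adjoint_inner_left]
      simp only [LinearEquiv.coe_coe, ← hA', LinearEquiv.symm_apply_apply]
  have hAO : IsOpen (A '' O) := by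
    have : A '' O = A'.toContinuousLinearEquiv.toHomeomorph '' O := rfl
    rw [this]
    exact (Homeomorph.isOpen_image _).2 hOo
  have hincl : (fun p : R2 => (1 + κ) • p) '' (⋃ x ∈ O, {p : R2 | SubgradAt u x p}) ⊆
      LinearMap.adjoint A '' (⋃ x ∈ A '' O, {p : R2 | SubgradAt u x p}) := by
    rintro _ ⟨p, hp, rfl⟩
    obtain ⟨x, hx, hpx⟩ := mem_iUnion₂.1 hp
    obtain ⟨y, hy, hpy⟩ := htouch x hx p hpx
    obtain ⟨q, hq, hqe⟩ := hwsub y _ hpy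
    exact ⟨q, mem_iUnion₂.2 ⟨A y, ⟨y, hy, rfl⟩, hq⟩, hqe⟩
  have hm := measure_mono (μ := volume) hincl
  have hl : volume ((fun p : R2 => (1 + κ) • p) '' (⋃ x ∈ O, {p : R2 | SubgradAt u x p})) =
      ENNReal.ofReal ((1 + κ) ^ 2) * volume (O ∩ Ω) := by
    have := volume_affine_image (⋃ x ∈ O, {p : R2 | SubgradAt u x p}) 0
      (by linarith : 0 ≤ 1 + κ)
    simp only [zero_add] at this
    rw [this, hA O hOo.measurableSet]
  have hr : volume (LinearMap.adjoint A '' (⋃ x ∈ A '' O, {p : R2 | SubgradAt u x p})) ≤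
      volume (O ∩ Ω) := by
    rw [Measure.addHaar_image_linearMap, det_adjoint, hdet, hA _ hAO.measurableSet]
    simp only [abs_one, ENNReal.ofReal_one, one_mul]
    have h1 : A '' O ∩ Ω ⊆ A '' (O ∩ Ω) := by
      rintro _ ⟨⟨x, hx, rfl⟩, hxΩ⟩
      exact ⟨x, ⟨hx, hPΩ x hx.1 hxΩ⟩, rfl⟩
    refine (measure_mono h1).trans (le_of_eq ?_)
    rw [Measure.addHaar_image_linearMap, hdet]
    simp
  rw [hl] at hm
  have hfin : volume (O ∩ Ω) ≠ ⊤ :=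
    ((hPb.subset (inter_subset_left.trans inter_subset_left)).measure_lt_top).ne
  have hpos : 0 < (volume (O ∩ Ω)).toReal := by
    refine ENNReal.toReal_pos (ne_of_gt ?_) hfin
    have h1 := (hOo.inter isOpen_interior).measure_pos volume ⟨x₀, hxO, hxi⟩
    exact h1.trans_le (measure_mono (inter_subset_inter_right _ interior_subset))
  have := ENNReal.toReal_mono hfin (hm.trans hr)
  rw [ENNReal.toReal_mul, ENNReal.toReal_ofReal (by positivity)] at this
  nlinarith [mul_pos hκ hpos, mul_pos (mul_pos hκ hκ) hpos]

/-! ### First consequences for pairs of potentials -/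

lemma Convex.smul_mem_interior_of_zero_mem_closure {Ω : Set R2} (hΩ : Convex ℝ Ω)
    (h0 : (0 : R2) ∈ closure Ω) {y : R2} (hy : y ∈ interior Ω) {c : ℝ} (hc : 0 < c) (hc1 : c ≤ 1) :
    c • y ∈ interior Ω := by
  have := hΩ.combo_interior_closure_mem_interior hy h0 hc (by linarith : 0 ≤ 1 - c) (by ring)
  simpa using this

namespace OTPair

variable {u v : R2 → ℝ} {Ω₁ Ω₂ : Set R2}

lemma zero_mem_closure (P : OTPair u v Ω₁ Ω₂) : (0 : R2) ∈ closure Ω₁ :=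
  frontier_subset_closure P.z1

lemma pos_of_mem_closure (P : OTPair u v Ω₁ Ω₂) {x : R2} (hx : x ∈ closure Ω₁) (hx0 : x ≠ 0) :
    0 < u x := by
  by_contra! hle
  refine false_of_flat_segment P.cu P.c1 P.i1 P.alex1 P.zero_mem_closure hx hx0.symm ?_
  intro t ht ht1
  rw [smul_zero, zero_add, P.u0]
  refine le_antisymm ?_ (P.nonneg _)
  have := convex_smul_le P.cu P.u0 x ht ht1
  nlinarith

lemma eq_zero_of_subgradAt_zero (P : OTPair u v Ω₁ Ω₂) {p : R2} (hp : SubgradAt u 0 p) :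
    p = 0 := by
  by_contra h
  have h1 := P.y2 0 p hp
  rw [P.u0, inner_zero_left, zero_add] at h1
  exact (P.swap.pos_of_mem_closure (P.r1 _ _ hp) h).ne' h1

lemma slope_small (P : OTPair u v Ω₁ Ω₂) {ε : ℝ} (hε : 0 < ε) :
    ∃ ρ > 0, ∀ x, ‖x‖ ≤ ρ → ∀ p, SubgradAt u x p → ‖p‖ < ε := by
  obtain ⟨ρ, hρ, h⟩ := subgrad_usc P.cu (isCompact_singleton (x := (0 : R2)))
    (isOpen_ball (x := (0 : R2)) (ε := ε)) (by
      rintro _ rfl p hp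
      rw [P.eq_zero_of_subgradAt_zero hp]
      exact mem_ball_self hε)
  refine ⟨ρ, hρ, fun x hx p hp => ?_⟩
  simpa using h 0 rfl x (by simpa using hx) p hp

lemma eq_zero_of_zero_of_neg_zero (P : OTPair u v Ω₁ Ω₂) {z : R2} (h1 : u z = 0)
    (h2 : u (-z) = 0) : z = 0 := by
  by_contra hz
  have hn : 0 < ‖z‖ := norm_pos_iff.2 hz
  obtain ⟨C, hC1, hC⟩ := P.sec1
  have hCp : 0 < C := by linarith
  set r := C⁻¹ * ‖z‖ with hr
  have hrp : 0 < r := by positivity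
  have hcomp : IsCompact (sphere (0 : R2) r ∩ closure Ω₁) :=
    (isCompact_sphere _ _).inter_right isClosed_closure
  have hscale : ∀ y ∈ closure Ω₁, r ≤ ‖y‖ → ∃ y' ∈ sphere (0 : R2) r ∩ closure Ω₁, u y' ≤ u y := by
    intro y hy hry
    have hyp : 0 < ‖y‖ := hrp.trans_le hry
    have hc0 : 0 ≤ r / ‖y‖ := by positivity
    have hc1 : r / ‖y‖ ≤ 1 := by rwa [div_le_one hyp]
    refine ⟨(r / ‖y‖) • y, ⟨?_, ?_⟩, ?_⟩
    · rw [mem_sphere_zero_iff_norm, norm_smul, norm_div, norm_norm, Real.norm_eq_abs,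
        abs_of_pos hrp, div_mul_cancel₀ _ hyp.ne']
    · have := P.c1.closure hy P.zero_mem_closure hc0 (by linarith : 0 ≤ 1 - r / ‖y‖) (by ring)
      simpa using this
    · have := convex_smul_le P.cu P.u0 y hc0 hc1
      nlinarith [P.nonneg y]
  have hpts : ∀ h : ℝ, 0 < h → h ≤ 1 → ∃ y ∈ sphere (0 : R2) r ∩ closure Ω₁, u y ≤ C * h := by
    intro h hh hh1
    obtain ⟨K, xh, -, hsym, -, hK, -, hK2⟩ := hC h hh hh1
    have hzK := hK2 z (by rw [h1]; exact hh.le) (by rw [h2]; exact hh.le)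
    have a1 := hK _ hzK
    have a2 := hK _ (hsym _ hzK)
    have hnorm : r ≤ ‖xh + C⁻¹ • z‖ ∨ r ≤ ‖xh + -(C⁻¹ • z)‖ := by
      by_contra! hcon
      have e1 : (2 : ℝ) • (C⁻¹ • z) = (xh + C⁻¹ • z) - (xh + -(C⁻¹ • z)) := by module
      have h3 := norm_sub_le (xh + C⁻¹ • z) (xh + -(C⁻¹ • z))
      rw [← e1, norm_smul, norm_smul, norm_inv, Real.norm_eq_abs, Real.norm_eq_abs,
        abs_of_pos hCp, abs_of_pos (two_pos : (0 : ℝ) < 2), ← hr] at h3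
      linarith [hcon.1, hcon.2]
    rcases hnorm with hn1 | hn1
    · obtain ⟨y, hy, hle⟩ := hscale _ (subset_closure a1.1) hn1
      exact ⟨y, hy, hle.trans a1.2⟩
    · obtain ⟨y, hy, hle⟩ := hscale _ (subset_closure a2.1) hn1
      exact ⟨y, hy, hle.trans a2.2⟩
  obtain ⟨y₀, hy₀, -⟩ := hpts 1 one_pos le_rfl
  obtain ⟨y, hy, hmin⟩ := hcomp.exists_isMinOn ⟨y₀, hy₀⟩ (convex_continuous P.cu).continuousOn
  have hupos : 0 < u y := P.pos_of_mem_closure hy.2 (by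
    rintro rfl
    have := mem_sphere_zero_iff_norm.1 hy.1
    simp only [norm_zero] at this
    linarith)
  obtain ⟨y', hy', hle⟩ := hpts (min 1 (u y / (2 * C))) (by positivity) (min_le_left _ _)
  have h3 : u y ≤ u y' := hmin hy'
  have h4 : C * min 1 (u y / (2 * C)) ≤ C * (u y / (2 * C)) := by gcongr; exact min_le_right _ _
  have h5 : C * (u y / (2 * C)) = u y / 2 := by field_simp
  linarith

end OTPair

/-! ### Dual frames -/

/-- `(a₁, a₂)` and `(b₁, b₂)` are dual frames of the plane. -/
structure DualFrame (a₁ a₂ b₁ b₂ : R2) : Prop where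
  h11 : ⟪a₁, b₁⟫ = 1
  h12 : ⟪a₁, b₂⟫ = 0
  h21 : ⟪a₂, b₁⟫ = 0
  h22 : ⟪a₂, b₂⟫ = 1

namespace DualFrame

variable {a₁ a₂ b₁ b₂ : R2}

lemma swap (F : DualFrame a₁ a₂ b₁ b₂) : DualFrame b₁ b₂ a₁ a₂ :=
  ⟨by rw [real_inner_comm]; exact F.h11, by rw [real_inner_comm]; exact F.h21,
    by rw [real_inner_comm]; exact F.h12, by rw [real_inner_comm]; exact F.h22⟩

lemma fst_comb (F : DualFrame a₁ a₂ b₁ b₂) (s t : ℝ) : ⟪s • a₁ + t • a₂, b₁⟫ = s := by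
  rw [inner_add_left, real_inner_smul_left, real_inner_smul_left, F.h11, F.h21]; ring

lemma snd_comb (F : DualFrame a₁ a₂ b₁ b₂) (s t : ℝ) : ⟪s • a₁ + t • a₂, b₂⟫ = t := by
  rw [inner_add_left, real_inner_smul_left, real_inner_smul_left, F.h12, F.h22]; ring

lemma exists_basis (F : DualFrame a₁ a₂ b₁ b₂) :
    ∃ B : Module.Basis (Fin 2) ℝ R2, B 0 = a₁ ∧ B 1 = a₂ := by
  have hli : LinearIndependent ℝ ![a₁, a₂] := by
    rw [LinearIndependent.pair_iff]
    intro s t hst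
    have h1 := F.fst_comb s t
    have h2 := F.snd_comb s t
    rw [hst, inner_zero_left] at h1 h2
    exact ⟨h1.symm, h2.symm⟩
  refine ⟨basisOfLinearIndependentOfCardEqFinrank hli (by simp), ?_, ?_⟩ <;> simp

lemma expand (F : DualFrame a₁ a₂ b₁ b₂) (x : R2) : x = ⟪x, b₁⟫ • a₁ + ⟪x, b₂⟫ • a₂ := by
  obtain ⟨B, h0, h1⟩ := F.exists_basis
  have hx := B.sum_repr x
  rw [Fin.sum_univ_two, h0, h1] at hx
  have e1 := F.fst_comb (B.repr x 0) (B.repr x 1)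
  have e2 := F.snd_comb (B.repr x 0) (B.repr x 1)
  rw [hx] at e1 e2
  rw [e1, e2, hx]

/-- A linear map with prescribed entries in the frame, together with its determinant. -/
lemma exists_linearMap (F : DualFrame a₁ a₂ b₁ b₂) (α β γ δ : ℝ) :
    ∃ A : R2 →ₗ[ℝ] R2, LinearMap.det A = α * δ - β * γ ∧
      ∀ s t : ℝ, A (s • a₁ + t • a₂) = (α * s + β * t) • a₁ + (γ * s + δ * t) • a₂ := by
  obtain ⟨B, h0, h1⟩ := F.exists_basis
  refine ⟨Matrix.toLin B B !![α, β; γ, δ], ?_, fun s t => ?_⟩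
  · rw [LinearMap.det_toLin, Matrix.det_fin_two_of]
  · have e0 : Matrix.toLin B B !![α, β; γ, δ] a₁ = α • a₁ + γ • a₂ := by
      rw [← h0, Matrix.toLin_self, Fin.sum_univ_two, h1]; simp
    have e1 : Matrix.toLin B B !![α, β; γ, δ] a₂ = β • a₁ + δ • a₂ := by
      rw [← h1, Matrix.toLin_self, Fin.sum_univ_two, h0]; simp
    rw [map_add, map_smul, map_smul, e0, e1]
    module

end DualFrame

/-! ### Perpendicular tangents -/

lemma le_add_smul_of_slopes {u : R2 → ℝ} (hu : ConvexOn ℝ univ u) {d : R2}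
    (h : ∀ x p, SubgradAt u x p → 0 ≤ ⟪p, d⟫) (x : R2) {s : ℝ} (hs : 0 ≤ s) :
    u x ≤ u (x + s • d) := by
  obtain ⟨p, hp⟩ := exists_subgradAt hu x
  have h1 := hp (x + s • d)
  rw [add_sub_cancel_left, real_inner_smul_right] at h1
  nlinarith [mul_nonneg hs (h x p hp)]

lemma exists_add_smul_mem_interior {Ω : Set R2} {y : R2} (hy : y ∈ interior Ω) (d : R2) :
    ∃ τ > 0, ∀ s : ℝ, |s| ≤ τ → y + s • d ∈ interior Ω := by
  have hc : Continuous fun s : ℝ => y + s • d := by fun_prop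
  have ho : IsOpen ((fun s : ℝ => y + s • d) ⁻¹' interior Ω) := isOpen_interior.preimage hc
  obtain ⟨τ, hτ, h⟩ := Metric.isOpen_iff.1 ho 0 (by simpa using hy)
  refine ⟨τ / 2, by positivity, fun s hs => h ?_⟩
  rw [mem_ball_zero_iff, Real.norm_eq_abs]
  linarith

lemma nonneg_inner_of_mem_closure {Ω : Set R2} {d : R2} (h : ∀ x ∈ Ω, 0 ≤ ⟪x, d⟫) {x : R2}
    (hx : x ∈ closure Ω) : 0 ≤ ⟪x, d⟫ := by
  have hcl : IsClosed {x : R2 | 0 ≤ ⟪x, d⟫} := isClosed_le (by fun_prop) (by fun_prop)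
  exact closure_minimal (fun x hx => h x hx) hcl hx

/-- Two transport domains at the origin whose tangent rays in the directions `a₁` and `-b₂`
are orthogonal, expressed in a sheared dual frame. -/
structure PerpConfig (u v : R2 → ℝ) (Ω₁ Ω₂ : Set R2) (a₁ a₂ b₁ b₂ : R2) (k₀ : ℝ) : Prop where
  pair : OTPair u v Ω₁ Ω₂
  frame : DualFrame a₁ a₂ b₁ b₂
  half1 : ∀ x ∈ Ω₁, 0 ≤ ⟪x, b₂⟫
  half2 : ∀ y ∈ Ω₂, 0 ≤ ⟪y, a₁⟫
  kpos : 0 < k₀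
  mem1 : k₀ • a₂ ∈ interior Ω₁
  mem2 : k₀ • b₁ ∈ interior Ω₂
  ray : ∀ σ : ℝ, 0 < σ → ∃ k : ℝ, 0 < k ∧ k • (σ • b₁ - b₂) ∈ interior Ω₂

namespace PerpConfig

variable {u v : R2 → ℝ} {Ω₁ Ω₂ : Set R2} {a₁ a₂ b₁ b₂ : R2} {k₀ : ℝ}

lemma slope_nonneg (H : PerpConfig u v Ω₁ Ω₂ a₁ a₂ b₁ b₂ k₀) (x p : R2) (hp : SubgradAt u x p) :
    0 ≤ ⟪p, a₁⟫ :=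
  nonneg_inner_of_mem_closure H.half2 (H.pair.r1 x p hp)

lemma dual_slope_nonneg (H : PerpConfig u v Ω₁ Ω₂ a₁ a₂ b₁ b₂ k₀) (y q : R2)
    (hq : SubgradAt v y q) : 0 ≤ ⟪q, b₂⟫ :=
  nonneg_inner_of_mem_closure H.half1 (H.pair.r2 y q hq)

lemma le_add_smul (H : PerpConfig u v Ω₁ Ω₂ a₁ a₂ b₁ b₂ k₀) (x : R2) {s : ℝ} (hs : 0 ≤ s) :
    u x ≤ u (x + s • a₁) :=
  le_add_smul_of_slopes H.pair.cu H.slope_nonneg x hs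

lemma apply_neg_smul (H : PerpConfig u v Ω₁ Ω₂ a₁ a₂ b₁ b₂ k₀) {t : ℝ} (ht : 0 ≤ t) :
    u (-(t • a₁)) = 0 := by
  refine le_antisymm ?_ (H.pair.nonneg _)
  have := H.le_add_smul (-(t • a₁)) ht
  rwa [neg_add_cancel, H.pair.u0] at this

lemma left_ne_zero (H : PerpConfig u v Ω₁ Ω₂ a₁ a₂ b₁ b₂ k₀) : a₁ ≠ 0 := by
  intro h
  have := H.frame.h11
  rw [h, inner_zero_left] at this
  exact zero_ne_one this

lemma pos_on_ray (H : PerpConfig u v Ω₁ Ω₂ a₁ a₂ b₁ b₂ k₀) {t : ℝ} (ht : 0 < t) :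
    0 < u (t • a₁) := by
  refine lt_of_le_of_ne (H.pair.nonneg _) fun h => ?_
  have := H.pair.eq_zero_of_zero_of_neg_zero h.symm (H.apply_neg_smul ht.le)
  exact (smul_ne_zero ht.ne' H.left_ne_zero) this

lemma smul_mem1 (H : PerpConfig u v Ω₁ Ω₂ a₁ a₂ b₁ b₂ k₀) {s : ℝ} (hs : 0 < s) (hsk : s ≤ k₀) :
    s • a₂ ∈ interior Ω₁ := by
  have := H.pair.c1.smul_mem_interior_of_zero_mem_closure H.pair.zero_mem_closure H.mem1
    (div_pos hs H.kpos) ((div_le_one H.kpos).2 hsk)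
  rwa [smul_smul, div_mul_cancel₀ _ H.kpos.ne'] at this

lemma smul_mem2 (H : PerpConfig u v Ω₁ Ω₂ a₁ a₂ b₁ b₂ k₀) {s : ℝ} (hs : 0 < s) (hsk : s ≤ k₀) :
    s • b₁ ∈ interior Ω₂ := by
  have := H.pair.c2.smul_mem_interior_of_zero_mem_closure H.pair.swap.zero_mem_closure H.mem2
    (div_pos hs H.kpos) ((div_le_one H.kpos).2 hsk)
  rwa [smul_smul, div_mul_cancel₀ _ H.kpos.ne'] at this

/-- Slopes on the tangent ray cannot lie above interior points of the target. -/
lemma sub_smul_notMem_interior (H : PerpConfig u v Ω₁ Ω₂ a₁ a₂ b₁ b₂ k₀) {t σ : ℝ} {p : R2}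
    (hp : SubgradAt u (t • a₁) p) (hσ : 0 ≤ σ) : p - σ • b₂ ∉ interior Ω₂ := by
  intro hy
  obtain ⟨τ, hτ, hmem⟩ := exists_add_smul_mem_interior hy (-b₂)
  have hb2 : b₂ ≠ 0 := by
    intro h
    have := H.frame.h22
    rw [h, inner_zero_right] at this
    exact zero_ne_one this
  have hval : ∀ s : ℝ, 0 ≤ s → s ≤ τ → v (p - σ • b₂ + s • -b₂) = v p := by
    intro s hs hsτ
    refine le_antisymm ?_ ?_
    · have := le_add_smul_of_slopes H.pair.cv H.dual_slope_nonneg (p - σ • b₂ + s • -b₂)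
        (add_nonneg hσ hs)
      rwa [show p - σ • b₂ + s • -b₂ + (σ + s) • b₂ = p by module] at this
    · have h1 := H.pair.y1 (t • a₁) _
        (subset_closure (interior_subset (hmem s (by rwa [abs_of_nonneg hs]))))
      have h2 := H.pair.y2 _ _ hp
      have h3 : ⟪t • a₁, p - σ • b₂ + s • -b₂⟫ = ⟪t • a₁, p⟫ := by
        rw [show p - σ • b₂ + s • -b₂ = p - (σ + s) • b₂ by module, inner_sub_right,
          real_inner_smul_left _ _, real_inner_smul_left, real_inner_smul_right, H.frame.h12]
        ring
      linarith
  refine false_of_flat_segment H.pair.cv H.pair.c2 H.pair.i2 H.pair.alex2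
    (x₀ := p - σ • b₂) (x₁ := p - σ • b₂ + τ • -b₂)
    (subset_closure (interior_subset hy))
    (subset_closure (interior_subset (hmem τ (by rw [abs_of_pos hτ])))) ?_ ?_
  · intro h
    have : τ • -b₂ = 0 := by simpa using h
    rw [smul_neg, neg_eq_zero] at this
    exact smul_ne_zero hτ.ne' hb2 this
  · intro r hr hr1
    rw [show (1 - r) • (p - σ • b₂) + r • (p - σ • b₂ + τ • -b₂) = p - σ • b₂ + (r * τ) • -b₂ by
      module, hval _ (by positivity) (by nlinarith)]
    have := hval 0 le_rfl hτ.le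
    rw [zero_smul, add_zero] at this
    exact this.symm

lemma slope_pos_of_pos (H : PerpConfig u v Ω₁ Ω₂ a₁ a₂ b₁ b₂ k₀) {s t : ℝ} {p : R2}
    (hs : 0 ≤ s) (ht : 0 < t) (htk : t ≤ k₀)
    (hp : SubgradAt u (s • a₁ + t • a₂) p) : 0 < ⟪p, a₁⟫ := by
  refine lt_of_le_of_ne (H.slope_nonneg _ _ hp) fun h0 => ?_
  have hin := H.smul_mem1 ht htk
  obtain ⟨τ, hτ, hmem⟩ := exists_add_smul_mem_interior hin (-a₁)
  have hval : ∀ r : ℝ, 0 ≤ r → u (t • a₂ + r • -a₁) = u (s • a₁ + t • a₂) := by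
    intro r hr
    refine le_antisymm ?_ ?_
    · have := H.le_add_smul (t • a₂ + r • -a₁) (add_nonneg hr hs)
      rwa [show t • a₂ + r • -a₁ + (r + s) • a₁ = s • a₁ + t • a₂ by module] at this
    · have := hp (t • a₂ + r • -a₁)
      rw [show t • a₂ + r • -a₁ - (s • a₁ + t • a₂) = (-(r + s)) • a₁ by module,
        real_inner_smul_right, ← h0] at this
      linarith
  refine false_of_flat_segment H.pair.cu H.pair.c1 H.pair.i1 H.pair.alex1
    (x₀ := t • a₂) (x₁ := t • a₂ + τ • -a₁)
    (subset_closure (interior_subset hin))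
    (subset_closure (interior_subset (hmem τ (by rw [abs_of_pos hτ])))) ?_ ?_
  · intro h
    have : τ • -a₁ = 0 := by simpa using h
    rw [smul_neg, neg_eq_zero] at this
    exact smul_ne_zero hτ.ne' H.left_ne_zero this
  · intro r hr hr1
    rw [show (1 - r) • (t • a₂) + r • (t • a₂ + τ • -a₁) = t • a₂ + (r * τ) • -a₁ by
      module, hval _ (by positivity)]
    have := hval 0 le_rfl
    rw [zero_smul, add_zero] at this
    exact this.symm

end PerpConfig

/-- A coordinate box of side `ρ` adapted to a perpendicular configuration. -/
structure PerpBox (u v : R2 → ℝ) (Ω₁ Ω₂ : Set R2) (a₁ a₂ b₁ b₂ : R2) (k₀ ρ : ℝ) : Prop where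
  cfg : PerpConfig u v Ω₁ Ω₂ a₁ a₂ b₁ b₂ k₀
  rpos : 0 < ρ
  rk : ρ ≤ k₀
  top : ∀ s : ℝ, 0 ≤ s → s ≤ ρ → s • a₁ + k₀ • a₂ ∈ interior Ω₁
  slope : ∀ s t : ℝ, 0 ≤ s → s ≤ ρ → 0 ≤ t → t ≤ ρ → ∀ p,
    SubgradAt u (s • a₁ + t • a₂) p → ⟪p, a₁⟫ < k₀

lemma norm_comb_le (a₁ a₂ : R2) {s t ρ : ℝ} (hs : 0 ≤ s) (hs1 : s ≤ ρ) (ht : 0 ≤ t)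
    (ht1 : t ≤ ρ) : ‖s • a₁ + t • a₂‖ ≤ ρ * (‖a₁‖ + ‖a₂‖) := by
  refine (norm_add_le _ _).trans ?_
  rw [norm_smul, norm_smul, Real.norm_eq_abs, Real.norm_eq_abs, abs_of_nonneg hs,
    abs_of_nonneg ht, mul_add]
  gcongr

lemma PerpConfig.exists_box {u v : R2 → ℝ} {Ω₁ Ω₂ : Set R2} {a₁ a₂ b₁ b₂ : R2} {k₀ : ℝ}
    (H : PerpConfig u v Ω₁ Ω₂ a₁ a₂ b₁ b₂ k₀) : ∃ ρ, PerpBox u v Ω₁ Ω₂ a₁ a₂ b₁ b₂ k₀ ρ := by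
  obtain ⟨τ, hτ, hmem⟩ := exists_add_smul_mem_interior H.mem1 a₁
  have hn : 0 < ‖a₁‖ := norm_pos_iff.2 H.left_ne_zero
  obtain ⟨r, hr, hsl⟩ := H.pair.slope_small (div_pos H.kpos hn)
  have hN : 0 < ‖a₁‖ + ‖a₂‖ := by positivity
  have hk := H.kpos
  refine ⟨min (min k₀ τ) (r / (‖a₁‖ + ‖a₂‖)), H, by positivity,
    (min_le_left _ _).trans (min_le_left _ _), fun s hs hs1 => ?_, fun s t hs hs1 ht ht1 p hp => ?_⟩
  · rw [add_comm]
    exact hmem s (by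
      rw [abs_of_nonneg hs]; exact hs1.trans ((min_le_left _ _).trans (min_le_right _ _)))
  · have h1 := norm_comb_le a₁ a₂ hs (hs1.trans (min_le_right _ _)) ht
      (ht1.trans (min_le_right _ _))
    rw [div_mul_cancel₀ _ hN.ne'] at h1
    have h2 := hsl _ h1 p hp
    rw [lt_div_iff₀ hn] at h2
    exact (real_inner_le_norm p a₁).trans_lt h2

namespace PerpBox

variable {u v : R2 → ℝ} {Ω₁ Ω₂ : Set R2} {a₁ a₂ b₁ b₂ : R2} {k₀ ρ : ℝ}

lemma upper_left (B : PerpBox u v Ω₁ Ω₂ a₁ a₂ b₁ b₂ k₀ ρ) {D : Set R2} (hD : Convex ℝ D)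
    (hsub : interior Ω₁ ⊆ D) {s t s' t' : ℝ} (hz : s' • a₁ + t' • a₂ ∈ D) (hs : 0 ≤ s)
    (hss : s ≤ s') (htt : t' ≤ t) (ht : 0 < t) (htk : t ≤ k₀) (hsρ : s ≤ ρ) :
    s • a₁ + t • a₂ ∈ D := by
  have hbase : t • a₂ ∈ D := hsub (B.cfg.smul_mem1 ht htk)
  rcases hs.eq_or_lt with rfl | hs
  · simpa using hbase
  have hs' : 0 < s' := hs.trans_le hss
  have hl0 : 0 ≤ s / s' := by positivity
  have hl1 : s / s' ≤ 1 := (div_le_one hs').2 hss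
  have hw := hD hbase hz (by linarith : 0 ≤ 1 - s / s') hl0 (by ring)
  set h := (1 - s / s') * t + s / s' * t' with hh
  have e1 : (1 - s / s') • t • a₂ + (s / s') • (s' • a₁ + t' • a₂) = s • a₁ + h • a₂ := by
    rw [show s • a₁ = (s / s' * s') • a₁ by rw [div_mul_cancel₀ _ hs'.ne'], hh]
    module
  rw [e1] at hw
  have hht : h ≤ t := by rw [hh]; nlinarith
  rcases hht.eq_or_lt with h0 | hlt
  · rwa [h0] at hw
  have hkh : 0 < k₀ - h := by linarith
  have hm0 : 0 ≤ (t - h) / (k₀ - h) := div_nonneg (by linarith) hkh.le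
  have hm1 : (t - h) / (k₀ - h) ≤ 1 := (div_le_one hkh).2 (by linarith)
  have := hD hw (hsub (B.top s hs.le hsρ)) (by linarith : 0 ≤ 1 - (t - h) / (k₀ - h)) hm0 (by ring)
  have e2 : (1 - (t - h) / (k₀ - h)) • (s • a₁ + h • a₂) +
      ((t - h) / (k₀ - h)) • (s • a₁ + k₀ • a₂) = s • a₁ + t • a₂ := by
    have e3 : (t - h) / (k₀ - h) * (k₀ - h) = t - h := div_mul_cancel₀ _ hkh.ne'
    rw [show s • a₁ + t • a₂ = s • a₁ + ((t - h) / (k₀ - h) * (k₀ - h) + h) • a₂ by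
      rw [e3]; ring_nf]
    module
  rwa [e2] at this

lemma slope_pos_on_ray (B : PerpBox u v Ω₁ Ω₂ a₁ a₂ b₁ b₂ k₀ ρ) {t : ℝ} (ht : 0 < t) {p : R2}
    (hp : SubgradAt u (t • a₁) p) : 0 < ⟪p, a₁⟫ := by
  have h1 := hp 0
  rw [zero_sub, inner_neg_right, real_inner_smul_right, B.cfg.pair.u0] at h1
  have h2 := B.cfg.pos_on_ray ht
  by_contra! h
  nlinarith

lemma slope_neg_on_ray (B : PerpBox u v Ω₁ Ω₂ a₁ a₂ b₁ b₂ k₀ ρ) {t : ℝ} (ht : 0 < t)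
    (htρ : t ≤ ρ) {p : R2} (hp : SubgradAt u (t • a₁) p) : ⟪p, a₂⟫ < 0 := by
  by_contra! h
  refine B.cfg.sub_smul_notMem_interior hp h ?_
  have e : p - ⟪p, a₂⟫ • b₂ = ⟪p, a₁⟫ • b₁ := by
    have := B.cfg.frame.swap.expand p
    nth_rewrite 1 [this]
    module
  rw [e]
  refine B.cfg.smul_mem2 (B.slope_pos_on_ray ht hp)
    (B.slope t 0 ht.le htρ le_rfl B.rpos.le p (by simpa using hp)).le

end PerpBox

lemma exists_subgradAt_inner_eq_zero {u : R2 → ℝ} {x p q d : R2} (hp : SubgradAt u x p)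
    (hq : SubgradAt u x q) (h1 : ⟪p, d⟫ ≤ 0) (h2 : 0 ≤ ⟪q, d⟫) :
    ∃ r, SubgradAt u x r ∧ ⟪r, d⟫ = 0 := by
  rcases h2.eq_or_lt with h2 | h2
  · exact ⟨q, hq, h2.symm⟩
  have hd : 0 < ⟪q, d⟫ - ⟪p, d⟫ := by linarith
  refine ⟨_, hp.combo hq (a := ⟪q, d⟫ / (⟪q, d⟫ - ⟪p, d⟫)) (b := -⟪p, d⟫ / (⟪q, d⟫ - ⟪p, d⟫))
    (by positivity) (div_nonneg (by linarith) hd.le) ?_, ?_⟩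
  · field_simp
    ring
  · rw [inner_add_left, real_inner_smul_left, real_inner_smul_left]
    field_simp
    ring

lemma isCompact_box (a₁ a₂ : R2) (ρ : ℝ) :
    IsCompact ((fun z : ℝ × ℝ => z.1 • a₁ + z.2 • a₂) '' (Icc 0 ρ ×ˢ Icc 0 ρ)) :=
  (isCompact_Icc.prod isCompact_Icc).image (by fun_prop)

lemma IsCompact.exists_pos_le {X : Type*} [TopologicalSpace X] {K : Set X} (hK : IsCompact K)
    {f : X → ℝ} (hf : ContinuousOn f K) (hpos : ∀ z ∈ K, 0 < f z) : ∃ m > 0, ∀ z ∈ K, m ≤ f z := by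
  rcases K.eq_empty_or_nonempty with rfl | hne
  · exact ⟨1, one_pos, by simp⟩
  · obtain ⟨z, hz, hmin⟩ := hK.exists_isMinOn hne hf
    exact ⟨f z, hpos z hz, fun w hw => hmin hw⟩

namespace PerpBox

variable {u v : R2 → ℝ} {Ω₁ Ω₂ : Set R2} {a₁ a₂ b₁ b₂ : R2} {k₀ ρ : ℝ}

lemma exists_nonpos_slope_of_notMem (B : PerpBox u v Ω₁ Ω₂ a₁ a₂ b₁ b₂ k₀ ρ) {s t : ℝ}
    (hs : 0 ≤ s) (hsρ : s ≤ ρ) (ht : 0 < t) (htρ : t ≤ ρ)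
    (hx : s • a₁ + t • a₂ ∉ closure Ω₁) :
    ∃ p, SubgradAt u (s • a₁ + t • a₂) p ∧ ⟪p, a₂⟫ ≤ 0 := by
  have hs : 0 < s := by
    refine lt_of_le_of_ne hs fun h => hx ?_
    rw [← h, zero_smul, zero_add]
    exact subset_closure (interior_subset (B.cfg.smul_mem1 ht (htρ.trans B.rk)))
  by_contra! hcon
  have hcont : Continuous fun τ : ℝ => s • a₁ + τ • a₂ := by fun_prop
  set S := (fun τ : ℝ => s • a₁ + τ • a₂) '' Icc 0 t with hS
  have hSc : IsCompact S := isCompact_Icc.image hcont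
  have hG := isCompact_subgrad B.cfg.pair.cu hSc
  have hlow : IsClosed ((fun τ : ℝ => s • a₁ + τ • a₂) ⁻¹' (Prod.fst ''
      ({z : R2 × R2 | z.1 ∈ S ∧ SubgradAt u z.1 z.2} ∩ {z | ⟪z.2, a₂⟫ ≤ 0}))) :=
    ((hG.inter_right (isClosed_le (by fun_prop) (by fun_prop))).image
      continuous_fst).isClosed.preimage hcont
  have hupp : IsClosed ((fun τ : ℝ => s • a₁ + τ • a₂) ⁻¹' (Prod.fst ''
      ({z : R2 × R2 | z.1 ∈ S ∧ SubgradAt u z.1 z.2} ∩ {z | 0 ≤ ⟪z.2, a₂⟫}))) :=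
    ((hG.inter_right (isClosed_le (by fun_prop) (by fun_prop))).image
      continuous_fst).isClosed.preimage hcont
  obtain ⟨τ, hτ, ⟨⟨z, p⟩, ⟨⟨-, hp⟩, hp2⟩, hz⟩, ⟨⟨z', q⟩, ⟨⟨-, hq⟩, hq2⟩, hz'⟩⟩ :=
    isPreconnected_closed_iff.1 (isPreconnected_Icc (a := (0 : ℝ)) (b := t)) _ _ hlow hupp
      (by
        intro τ hτ
        obtain ⟨p, hp⟩ := exists_subgradAt B.cfg.pair.cu (s • a₁ + τ • a₂)
        rcases le_total ⟪p, a₂⟫ 0 with h | h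
        · exact Or.inl ⟨(_, p), ⟨⟨⟨τ, hτ, rfl⟩, hp⟩, h⟩, rfl⟩
        · exact Or.inr ⟨(_, p), ⟨⟨⟨τ, hτ, rfl⟩, hp⟩, h⟩, rfl⟩)
      (by
        have h0 : (0 : ℝ) ∈ Icc 0 t := ⟨le_rfl, ht.le⟩
        obtain ⟨p, hp⟩ := exists_subgradAt B.cfg.pair.cu (s • a₁ + (0 : ℝ) • a₂)
        exact ⟨0, h0, ⟨(_, p), ⟨⟨⟨0, h0, rfl⟩, hp⟩,
          (B.slope_neg_on_ray hs hsρ (by simpa using hp)).le⟩, rfl⟩⟩)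
      (by
        have h0 : t ∈ Icc 0 t := ⟨ht.le, le_rfl⟩
        obtain ⟨p, hp⟩ := exists_subgradAt B.cfg.pair.cu (s • a₁ + t • a₂)
        exact ⟨t, h0, ⟨(_, p), ⟨⟨⟨t, h0, rfl⟩, hp⟩, (hcon p hp).le⟩, rfl⟩⟩)
  simp only at hz hz' hp hq hp2 hq2
  subst hz hz'
  obtain ⟨r, hr, hr0⟩ := exists_subgradAt_inner_eq_zero hp hq hp2 hq2
  have hτ0 : 0 < τ := by
    refine lt_of_le_of_ne hτ.1 fun h => ?_
    rw [← h, zero_smul, add_zero] at hr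
    exact (B.slope_neg_on_ray hs hsρ hr).ne hr0
  have hτρ : τ ≤ ρ := hτ.2.trans htρ
  have hr1 := B.cfg.slope_pos_of_pos hs.le hτ0 (hτρ.trans B.rk) hr
  have hr2 := B.slope s τ hs.le hsρ hτ0.le hτρ r hr
  have hrin : r ∈ interior Ω₂ := by
    have e := B.cfg.frame.swap.expand r
    rw [hr0, zero_smul, add_zero] at e
    rw [e]
    exact B.cfg.smul_mem2 hr1 hr2.le
  have hcl := B.cfg.pair.mem_closure_of_slope_interior hr hrin
  exact hx (B.upper_left B.cfg.pair.c1.closure (interior_subset.trans subset_closure) hcl hs.le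
    le_rfl hτ.2 ht (htρ.trans B.rk) hsρ)

lemma exists_outer_slope (B : PerpBox u v Ω₁ Ω₂ a₁ a₂ b₁ b₂ k₀ ρ) :
    ∃ g : ℝ, 0 < g ∧ g ≤ 1 ∧ ∀ s t : ℝ, 0 ≤ s → s ≤ ρ → 0 ≤ t → t ≤ ρ → (s = ρ ∨ t = ρ) →
      ∀ p, SubgradAt u (s • a₁ + t • a₂) p → g ^ 2 * s * ⟪p, a₂⟫ ≤ t * ⟪p, a₁⟫ := by
  have hbox := isCompact_box a₁ a₂ ρ
  obtain ⟨M, hM⟩ := subgrad_bounded B.cfg.pair.cu hbox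
  have hG := isCompact_subgrad B.cfg.pair.cu hbox
  have hcl : IsClosed {z : R2 × R2 | (⟪z.1, b₁⟫ = ρ ∨ ⟪z.1, b₂⟫ = ρ) ∧ 0 ≤ ⟪z.2, a₂⟫} :=
    IsClosed.inter (s₂ := {z : R2 × R2 | 0 ≤ ⟪z.2, a₂⟫})
      ((isClosed_eq (by fun_prop) (by fun_prop)).union
        (isClosed_eq (by fun_prop) (by fun_prop)))
      (isClosed_le (by fun_prop) (by fun_prop))
  have hpos1 : ∀ s t : ℝ, 0 ≤ s → s ≤ ρ → 0 ≤ t → t ≤ ρ → (s = ρ ∨ t = ρ) →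
      ∀ p, SubgradAt u (s • a₁ + t • a₂) p → 0 ≤ ⟪p, a₂⟫ → 0 < t * ⟪p, a₁⟫ := by
    intro s t hs hs1 ht ht1 hor p hp hp2
    have ht0 : 0 < t := by
      refine lt_of_le_of_ne ht fun h => ?_
      rcases hor with h' | h'
      · rw [← h, zero_smul, add_zero] at hp
        exact absurd (B.slope_neg_on_ray (by rw [h']; exact B.rpos) hs1 hp) (not_lt.2 hp2)
      · exact B.rpos.ne (h.trans h')
    exact mul_pos ht0 (B.cfg.slope_pos_of_pos hs ht0 (ht1.trans B.rk) hp)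
  obtain ⟨m, hm, hmin⟩ := (hG.inter_right hcl).exists_pos_le
    (f := fun z => ⟪z.1, b₂⟫ * ⟪z.2, a₁⟫) (by fun_prop) (by
      rintro ⟨z, p⟩ ⟨⟨⟨⟨s, t⟩, ⟨hs, ht⟩, rfl⟩, hp⟩, hor, hp2⟩
      simp only [B.cfg.frame.fst_comb, B.cfg.frame.snd_comb] at hor hp hp2 ⊢
      exact hpos1 s t hs.1 hs.2 ht.1 ht.2 hor p hp hp2)
  have hr := B.rpos
  set N := ρ * (|M| * ‖a₂‖) + 1 with hN
  have hNp : 0 < N := by positivity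
  refine ⟨min 1 (m / N), by positivity, min_le_left _ _, ?_⟩
  intro s t hs hs1 ht ht1 hor p hp
  set g := min 1 (m / N) with hg
  have hg0 : 0 < g := by positivity
  have hg1 : g ≤ 1 := min_le_left _ _
  have hgm : g * N ≤ m := (le_div_iff₀ hNp).1 (min_le_right _ _)
  have hmem : s • a₁ + t • a₂ ∈ (fun z : ℝ × ℝ => z.1 • a₁ + z.2 • a₂) '' (Icc 0 ρ ×ˢ Icc 0 ρ) :=
    ⟨(s, t), ⟨⟨hs, hs1⟩, ⟨ht, ht1⟩⟩, rfl⟩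
  rcases le_or_gt 0 ⟪p, a₂⟫ with h | h
  · have h1 := hmin (s • a₁ + t • a₂, p) ⟨⟨hmem, hp⟩, by
      simpa only [B.cfg.frame.fst_comb, B.cfg.frame.snd_comb] using hor, h⟩
    simp only [B.cfg.frame.snd_comb] at h1
    have h2 : ⟪p, a₂⟫ ≤ |M| * ‖a₂‖ := (real_inner_le_norm p a₂).trans (by
      gcongr
      exact (hM _ hmem p hp).trans (le_abs_self M))
    have h3 : s * ⟪p, a₂⟫ ≤ ρ * (|M| * ‖a₂‖) := by gcongr
    have h4 : 0 ≤ s * ⟪p, a₂⟫ := by positivity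
    have h5 : g ^ 2 ≤ g := by nlinarith
    calc g ^ 2 * s * ⟪p, a₂⟫ = g ^ 2 * (s * ⟪p, a₂⟫) := by ring
      _ ≤ g * (s * ⟪p, a₂⟫) := by gcongr
      _ ≤ g * N := by gcongr; linarith
      _ ≤ m := hgm
      _ ≤ _ := h1
  · have h1 : 0 ≤ t * ⟪p, a₁⟫ := mul_nonneg ht (B.cfg.slope_nonneg _ _ hp)
    have h2 : 0 ≤ g ^ 2 * s := by positivity
    nlinarith

end PerpBox

lemma le_rotate_of_slope {u : R2 → ℝ} {a₁ a₂ : R2} {ρ g M : ℝ} (hg : 0 < g)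
    (hM : ∀ s t : ℝ, 0 ≤ s → s ≤ ρ → 0 ≤ t → t ≤ ρ → ∀ p,
      SubgradAt u (s • a₁ + t • a₂) p → |s * ⟪p, a₁⟫ + t * ⟪p, a₂⟫| ≤ M)
    {θ : ℝ} (hθ : 0 ≤ θ) (hθ1 : θ ≤ Real.pi / 2) {s t : ℝ} (hs : 0 ≤ s) (hs1 : s ≤ ρ)
    (ht : 0 ≤ t) (ht1 : t ≤ ρ) {p : R2} (hp : SubgradAt u (s • a₁ + t • a₂) p)
    (hslope : g ^ 2 * s * ⟪p, a₂⟫ ≤ t * ⟪p, a₁⟫) :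
    u (s • a₁ + t • a₂) ≤ u ((Real.cos θ * s + g⁻¹ * Real.sin θ * t) • a₁ +
      (-(g * Real.sin θ) * s + Real.cos θ * t) • a₂) + M * θ ^ 2 := by
  have h1 := hp ((Real.cos θ * s + g⁻¹ * Real.sin θ * t) • a₁ +
      (-(g * Real.sin θ) * s + Real.cos θ * t) • a₂)
  have e : (Real.cos θ * s + g⁻¹ * Real.sin θ * t) • a₁ +
      (-(g * Real.sin θ) * s + Real.cos θ * t) • a₂ - (s • a₁ + t • a₂) =
      (Real.cos θ * s + g⁻¹ * Real.sin θ * t - s) • a₁ +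
      (-(g * Real.sin θ) * s + Real.cos θ * t - t) • a₂ := by module
  rw [e, inner_add_right, real_inner_smul_right, real_inner_smul_right] at h1
  have hsin : 0 ≤ Real.sin θ := Real.sin_nonneg_of_nonneg_of_le_pi hθ (by linarith [Real.pi_pos])
  have hcos := Real.one_sub_sq_div_two_le_cos (x := θ)
  have hcos1 := Real.cos_le_one θ
  have hb := (abs_le.1 (hM s t hs hs1 ht ht1 p hp)).2
  have hM0 : 0 ≤ M := (abs_nonneg _).trans (hM s t hs hs1 ht ht1 p hp)
  have h2 : 0 ≤ Real.sin θ * g⁻¹ * (t * ⟪p, a₁⟫ - g ^ 2 * s * ⟪p, a₂⟫) :=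
    mul_nonneg (by positivity) (by linarith)
  have h3 : Real.sin θ * g⁻¹ * (t * ⟪p, a₁⟫ - g ^ 2 * s * ⟪p, a₂⟫) =
      Real.sin θ * (g⁻¹ * t * ⟪p, a₁⟫ - g * s * ⟪p, a₂⟫) := by field_simp
  have h4 : (1 - Real.cos θ) * (s * ⟪p, a₁⟫ + t * ⟪p, a₂⟫) ≤ M * θ ^ 2 := by
    calc (1 - Real.cos θ) * (s * ⟪p, a₁⟫ + t * ⟪p, a₂⟫) ≤ (1 - Real.cos θ) * M :=
          mul_le_mul_of_nonneg_left hb (by linarith)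
      _ ≤ θ ^ 2 * M := mul_le_mul_of_nonneg_right (by nlinarith [sq_nonneg θ]) hM0
      _ = M * θ ^ 2 := mul_comm _ _
  rw [h3] at h2
  linarith

lemma Convex.add_smul_mem_interior_of_zero_mem_closure {Ω : Set R2} (hΩ : Convex ℝ Ω)
    (h0 : (0 : R2) ∈ closure Ω) {y z : R2} (hy : y ∈ interior Ω) (hz : z ∈ interior Ω) {α β : ℝ}
    (hα : 0 < α) (hβ : 0 < β) (hle : α + β ≤ 1) : α • y + β • z ∈ interior Ω := by
  have hs : 0 < α + β := by positivity
  have h1 := hΩ.interior hy hz (a := α / (α + β)) (b := β / (α + β)) (by positivity)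
    (by positivity) (by field_simp)
  have h2 := hΩ.smul_mem_interior_of_zero_mem_closure h0 h1 hs hle
  rwa [smul_add, smul_smul, smul_smul, mul_div_cancel₀ _ hs.ne', mul_div_cancel₀ _ hs.ne'] at h2

namespace PerpBox

variable {u v : R2 → ℝ} {Ω₁ Ω₂ : Set R2} {a₁ a₂ b₁ b₂ : R2} {k₀ ρ : ℝ}

/-- Below a point of the box outside the interior of the domain, the domain is avoided. -/
lemma notMem_closure_below (B : PerpBox u v Ω₁ Ω₂ a₁ a₂ b₁ b₂ k₀ ρ) {s t t' : ℝ} (hs : 0 ≤ s)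
    (hs1 : s ≤ ρ) (ht : t < ρ) (htt : t' < t) (hx : s • a₁ + t • a₂ ∉ interior Ω₁) :
    s • a₁ + t' • a₂ ∉ closure Ω₁ := by
  intro hcl
  have hk : 0 < k₀ - t' := by linarith [B.rk]
  have hl0 : 0 < (t - t') / (k₀ - t') := div_pos (by linarith) hk
  have hl1 : (t - t') / (k₀ - t') ≤ 1 := (div_le_one hk).2 (by linarith [B.rk])
  have h1 := B.cfg.pair.c1.combo_interior_closure_mem_interior (B.top s hs hs1) hcl hl0
    (by linarith : 0 ≤ 1 - (t - t') / (k₀ - t')) (by ring)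
  have e3 : (t - t') / (k₀ - t') * (k₀ - t') = t - t' := div_mul_cancel₀ _ hk.ne'
  have e2 : ((t - t') / (k₀ - t')) • (s • a₁ + k₀ • a₂) +
      (1 - (t - t') / (k₀ - t')) • (s • a₁ + t' • a₂) = s • a₁ + t • a₂ := by
    rw [show s • a₁ + t • a₂ = s • a₁ + ((t - t') / (k₀ - t') * (k₀ - t') + t') • a₂ by
      rw [e3]; ring_nf]
    module
  rw [e2] at h1
  exact hx h1

lemma le_rotate (B : PerpBox u v Ω₁ Ω₂ a₁ a₂ b₁ b₂ k₀ ρ) :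
    ∃ g M : ℝ, 0 < g ∧ g ≤ 1 ∧ ∀ θ : ℝ, 0 ≤ θ → θ ≤ Real.pi / 2 → ∀ s t : ℝ, 0 ≤ s → s ≤ ρ →
      0 ≤ t → t ≤ ρ →
      u (s • a₁ + t • a₂) ≤ u ((Real.cos θ * s + g⁻¹ * Real.sin θ * t) • a₁ +
        (-(g * Real.sin θ) * s + Real.cos θ * t) • a₂) + M * θ ^ 2 := by
  have F := B.cfg.frame
  have huc := convex_continuous B.cfg.pair.cu
  obtain ⟨g, hg, hg1, hout⟩ := B.exists_outer_slope
  obtain ⟨M₀, hM₀⟩ := subgrad_bounded B.cfg.pair.cu (isCompact_box a₁ a₂ ρ)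
  set M := |M₀| * (ρ * (‖a₁‖ + ‖a₂‖)) with hMdef
  have hM : ∀ s t : ℝ, 0 ≤ s → s ≤ ρ → 0 ≤ t → t ≤ ρ → ∀ p,
      SubgradAt u (s • a₁ + t • a₂) p → |s * ⟪p, a₁⟫ + t * ⟪p, a₂⟫| ≤ M := by
    intro s t hs hs1 ht ht1 p hp
    have h1 := abs_real_inner_le_norm p (s • a₁ + t • a₂)
    rw [inner_add_right, real_inner_smul_right, real_inner_smul_right] at h1
    refine h1.trans ?_
    rw [hMdef]
    gcongr
    · exact (hM₀ _ ⟨(s, t), ⟨⟨hs, hs1⟩, ⟨ht, ht1⟩⟩, rfl⟩ p hp).trans (le_abs_self _)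
    · exact norm_comb_le a₁ a₂ hs hs1 ht ht1
  refine ⟨g, M, hg, hg1, fun θ hθ hθ1 => ?_⟩
  have hgood : ∀ s t : ℝ, 0 ≤ s → s ≤ ρ → 0 ≤ t → t ≤ ρ →
      (∃ p, SubgradAt u (s • a₁ + t • a₂) p ∧ g ^ 2 * s * ⟪p, a₂⟫ ≤ t * ⟪p, a₁⟫) →
      u (s • a₁ + t • a₂) ≤ u ((Real.cos θ * s + g⁻¹ * Real.sin θ * t) • a₁ +
        (-(g * Real.sin θ) * s + Real.cos θ * t) • a₂) + M * θ ^ 2 := by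
    rintro s t hs hs1 ht ht1 ⟨p, hp, hsl⟩
    exact le_rotate_of_slope hg hM hθ hθ1 hs hs1 ht ht1 hp hsl
  have hnonpos : ∀ s t : ℝ, 0 ≤ s → 0 ≤ t →
      (∃ p, SubgradAt u (s • a₁ + t • a₂) p ∧ ⟪p, a₂⟫ ≤ 0) →
      ∃ p, SubgradAt u (s • a₁ + t • a₂) p ∧ g ^ 2 * s * ⟪p, a₂⟫ ≤ t * ⟪p, a₁⟫ := by
    rintro s t hs ht ⟨p, hp, hp2⟩
    refine ⟨p, hp, ?_⟩
    have h1 : 0 ≤ t * ⟪p, a₁⟫ := mul_nonneg ht (B.cfg.slope_nonneg _ _ hp)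
    have h2 : 0 ≤ g ^ 2 * s := by positivity
    nlinarith
  have hnotint : ∀ s t : ℝ, 0 < s → s < ρ → 0 < t → t < ρ → s • a₁ + t • a₂ ∉ interior Ω₁ →
      u (s • a₁ + t • a₂) ≤ u ((Real.cos θ * s + g⁻¹ * Real.sin θ * t) • a₁ +
        (-(g * Real.sin θ) * s + Real.cos θ * t) • a₂) + M * θ ^ 2 := by
    intro s t hs hs1 ht ht1 hx
    have hcl : IsClosed {τ : ℝ | u (s • a₁ + τ • a₂) ≤
        u ((Real.cos θ * s + g⁻¹ * Real.sin θ * τ) • a₁ +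
        (-(g * Real.sin θ) * s + Real.cos θ * τ) • a₂) + M * θ ^ 2} :=
      isClosed_le (by fun_prop) (by fun_prop)
    have hsub : Ioo 0 t ⊆ {τ : ℝ | u (s • a₁ + τ • a₂) ≤
        u ((Real.cos θ * s + g⁻¹ * Real.sin θ * τ) • a₁ +
        (-(g * Real.sin θ) * s + Real.cos θ * τ) • a₂) + M * θ ^ 2} := by
      intro τ hτ
      have hτρ : τ ≤ ρ := (hτ.2.trans ht1).le
      refine hgood s τ hs.le hs1.le hτ.1.le hτρ (hnonpos s τ hs.le hτ.1.le ?_)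
      exact B.exists_nonpos_slope_of_notMem hs.le hs1.le hτ.1 hτρ
        (B.notMem_closure_below hs.le hs1.le ht1 hτ.2 hx)
    have h1 := closure_minimal hsub hcl
    rw [closure_Ioo ht.ne] at h1
    exact h1 ⟨ht.le, le_rfl⟩
  have hbdry : ∀ s t : ℝ, 0 ≤ s → s ≤ ρ → 0 ≤ t → t ≤ ρ →
      ¬ (0 < s ∧ s < ρ ∧ 0 < t ∧ t < ρ ∧ s • a₁ + t • a₂ ∈ interior Ω₁) →
      u (s • a₁ + t • a₂) ≤ u ((Real.cos θ * s + g⁻¹ * Real.sin θ * t) • a₁ +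
        (-(g * Real.sin θ) * s + Real.cos θ * t) • a₂) + M * θ ^ 2 := by
    intro s t hs hs1 ht ht1 hnot
    obtain ⟨p, hp⟩ := exists_subgradAt B.cfg.pair.cu (s • a₁ + t • a₂)
    have hp1 := B.cfg.slope_nonneg _ _ hp
    rcases hs.eq_or_lt with h | hs0
    · refine hgood s t hs hs1 ht ht1 ⟨p, hp, ?_⟩
      rw [← h]
      nlinarith [mul_nonneg ht hp1]
    rcases ht.eq_or_lt with h | ht0
    · refine hgood s t hs hs1 ht ht1 (hnonpos s t hs ht ⟨p, hp, ?_⟩)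
      rw [← h, zero_smul, add_zero] at hp
      exact (B.slope_neg_on_ray hs0 hs1 hp).le
    rcases hs1.eq_or_lt with h | hs2
    · exact hgood s t hs hs1 ht ht1 ⟨p, hp, hout s t hs hs1 ht ht1 (Or.inl h) p hp⟩
    rcases ht1.eq_or_lt with h | ht2
    · exact hgood s t hs hs1 ht ht1 ⟨p, hp, hout s t hs hs1 ht ht1 (Or.inr h) p hp⟩
    exact hnotint s t hs0 hs2 ht0 ht2 fun hi => hnot ⟨hs0, hs2, ht0, ht2, hi⟩
  intro s t hs hs1 ht ht1
  by_cases hin : 0 < s ∧ s < ρ ∧ 0 < t ∧ t < ρ ∧ s • a₁ + t • a₂ ∈ interior Ω₁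
  swap
  · exact hbdry s t hs hs1 ht ht1 hin
  obtain ⟨A, hdet, hA⟩ := F.exists_linearMap (Real.cos θ) (g⁻¹ * Real.sin θ) (-(g * Real.sin θ))
    (Real.cos θ)
  have hdet1 : LinearMap.det A = 1 := by
    rw [hdet]
    have := Real.sin_sq_add_cos_sq θ
    field_simp
    linarith
  have hQo : IsOpen ({x : R2 | 0 < ⟪x, b₁⟫} ∩ {x : R2 | ⟪x, b₁⟫ < ρ} ∩ {x : R2 | 0 < ⟪x, b₂⟫} ∩
      {x : R2 | ⟪x, b₂⟫ < ρ} ∩ interior Ω₁) := by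
    refine ((((isOpen_lt ?_ ?_).inter (isOpen_lt ?_ ?_)).inter (isOpen_lt ?_ ?_)).inter
      (isOpen_lt ?_ ?_)).inter isOpen_interior <;> fun_prop
  have hQcl : closure ({x : R2 | 0 < ⟪x, b₁⟫} ∩ {x : R2 | ⟪x, b₁⟫ < ρ} ∩ {x : R2 | 0 < ⟪x, b₂⟫} ∩
      {x : R2 | ⟪x, b₂⟫ < ρ} ∩ interior Ω₁) ⊆
      {x : R2 | 0 ≤ ⟪x, b₁⟫} ∩ {x : R2 | ⟪x, b₁⟫ ≤ ρ} ∩ {x : R2 | 0 ≤ ⟪x, b₂⟫} ∩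
      {x : R2 | ⟪x, b₂⟫ ≤ ρ} := by
    refine closure_minimal ?_ ?_
    · rintro x ⟨⟨⟨⟨h1, h2⟩, h3⟩, h4⟩, -⟩
      rw [mem_ofPred_eq] at h1 h2 h3 h4
      exact ⟨⟨⟨h1.le, h2.le⟩, h3.le⟩, h4.le⟩
    · refine (((isClosed_le ?_ ?_).inter (isClosed_le ?_ ?_)).inter (isClosed_le ?_ ?_)).inter
        (isClosed_le ?_ ?_) <;> fun_prop
  have key := le_comp_linear_of_boundary B.cfg.pair.cu B.cfg.pair.alex1 A hdet1 hQo ?_ ?_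
    (M := M * θ ^ 2) ?_ (x₀ := s • a₁ + t • a₂) ?_ hin.2.2.2.2
  · rwa [hA] at key
  · refine (isBounded_closedBall (x := (0 : R2)) (r := ρ * (‖a₁‖ + ‖a₂‖))).subset ?_
    intro x hx
    obtain ⟨⟨⟨h1, h2⟩, h3⟩, h4⟩ := hQcl (subset_closure hx)
    rw [mem_closedBall_zero_iff, F.expand x]
    exact norm_comb_le a₁ a₂ h1 h2 h3 h4
  · exact fun x hx _ => interior_subset hx.2
  · intro x hx hxn
    obtain ⟨⟨⟨h1, h2⟩, h3⟩, h4⟩ := hQcl hx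
    have h5 := hbdry ⟪x, b₁⟫ ⟪x, b₂⟫ h1 h2 h3 h4 (by
      rintro ⟨g1, g2, g3, g4, g5⟩
      rw [← F.expand x] at g5
      exact hxn ⟨⟨⟨⟨g1, g2⟩, g3⟩, g4⟩, g5⟩)
    rwa [← hA, ← F.expand x] at h5
  · simp only [mem_inter_iff, mem_ofPred_eq, F.fst_comb, F.snd_comb]
    exact ⟨⟨⟨⟨hin.1, hin.2.1⟩, hin.2.2.1⟩, hin.2.2.2.1⟩, hin.2.2.2.2⟩

lemma exists_le_on_ray (B : PerpBox u v Ω₁ Ω₂ a₁ a₂ b₁ b₂ k₀ ρ) :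
    ∃ g : ℝ, 0 < g ∧ g ≤ 1 ∧ ∀ t : ℝ, 0 < t → t ≤ ρ → u ((g * t) • a₂) ≤ u (t • a₁) := by
  obtain ⟨g, M, hg, hg1, hrot⟩ := B.le_rotate
  refine ⟨g, hg, hg1, fun t ht ht1 => ?_⟩
  set f : ℝ → ℝ := fun θ => u ((t * Real.sin θ) • a₁ + (g * t * Real.cos θ) • a₂) with hf
  have hstep : ∀ θ τ : ℝ, 0 ≤ θ → 0 ≤ τ → θ + τ ≤ Real.pi / 2 → f θ ≤ f (θ + τ) + M * τ ^ 2 := by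
    intro θ τ hθ hτ hle
    have hs0 : 0 ≤ Real.sin θ :=
      Real.sin_nonneg_of_nonneg_of_le_pi hθ (by linarith [Real.pi_pos])
    have hc0 : 0 ≤ Real.cos θ := Real.cos_nonneg_of_mem_Icc ⟨by linarith [Real.pi_pos], by linarith⟩
    have h1 := hrot τ hτ (by linarith) (t * Real.sin θ) (g * t * Real.cos θ) (by positivity)
      (by nlinarith [Real.sin_le_one θ]) (by positivity) (by
        have : g * t * Real.cos θ ≤ 1 * t * 1 := by gcongr; exact Real.cos_le_one θ
        linarith)
    have e1 : Real.cos τ * (t * Real.sin θ) + g⁻¹ * Real.sin τ * (g * t * Real.cos θ) =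
        t * Real.sin (θ + τ) := by
      rw [Real.sin_add]; field_simp
    have e2 : -(g * Real.sin τ) * (t * Real.sin θ) + Real.cos τ * (g * t * Real.cos θ) =
        g * t * Real.cos (θ + τ) := by
      rw [Real.cos_add]; ring
    rw [e1, e2] at h1
    exact h1
  have hends : f 0 = u ((g * t) • a₂) ∧ f (Real.pi / 2) = u (t • a₁) := by
    constructor <;> simp [hf]
  rw [← hends.1, ← hends.2]
  by_contra! hlt
  obtain ⟨N, hN⟩ := exists_nat_gt (M * (Real.pi / 2) ^ 2 / (f 0 - f (Real.pi / 2)))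
  have hd : 0 < f 0 - f (Real.pi / 2) := by linarith
  have hN' : M * (Real.pi / 2) ^ 2 < (N + 1) * (f 0 - f (Real.pi / 2)) := by
    rw [div_lt_iff₀ hd] at hN
    nlinarith
  set τ : ℝ := Real.pi / 2 / (N + 1) with hτ
  have hNp : (0 : ℝ) < N + 1 := by positivity
  have hτ0 : 0 ≤ τ := by have := Real.pi_pos; positivity
  have hτN : (N + 1) * τ = Real.pi / 2 := by rw [hτ]; field_simp
  have hind : ∀ k : ℕ, k ≤ N + 1 → f 0 ≤ f (k * τ) + k * (M * τ ^ 2) := by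
    intro k
    induction k with
    | zero => intro _; simp
    | succ k ih =>
      intro hk
      have h1 := ih (by omega)
      have hk' : ((k : ℝ) + 1) ≤ N + 1 := by exact_mod_cast hk
      have h2 := hstep (k * τ) τ (by positivity) hτ0 (by rw [← hτN]; nlinarith)
      push_cast
      rw [show ((k : ℝ) + 1) * τ = k * τ + τ by ring]
      linarith
  have h3 := hind (N + 1) le_rfl
  push_cast at h3
  rw [hτN] at h3
  have h4 : (N + 1) * ((N + 1) * (M * τ ^ 2)) = M * (Real.pi / 2) ^ 2 := by
    rw [← hτN]; ring
  nlinarith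

end PerpBox

theorem PerpConfig.false {u v : R2 → ℝ} {Ω₁ Ω₂ : Set R2} {a₁ a₂ b₁ b₂ : R2} {k₀ : ℝ}
    (H : PerpConfig u v Ω₁ Ω₂ a₁ a₂ b₁ b₂ k₀) : False := by
  obtain ⟨ρ, B⟩ := H.exists_box
  obtain ⟨g, hg, hg1, hray⟩ := B.exists_le_on_ray
  obtain ⟨C, hC1, hC⟩ := H.pair.sec1
  have hCp : 0 < C := by linarith
  set σ := g / (4 * C * (C + 1)) with hσ
  have hσp : 0 < σ := by positivity
  obtain ⟨k, hk, hkmem⟩ := H.ray σ hσp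
  have hk0 := H.kpos
  have hn : 0 < ‖a₁‖ := norm_pos_iff.2 H.left_ne_zero
  set W := ‖a₂‖ / k + ‖a₁‖ / k₀ + 1 with hW
  have hWp : 1 ≤ W := by
    have : 0 ≤ ‖a₂‖ / k + ‖a₁‖ / k₀ := by positivity
    linarith
  obtain ⟨r, hr, hsmall⟩ := H.pair.slope_small (ε := W⁻¹) (by positivity)
  set t := min ρ (min r 1 / ‖a₁‖) with ht
  have hρ := B.rpos
  have htp : 0 < t := by positivity
  have htρ : t ≤ ρ := min_le_left _ _
  have htn : t * ‖a₁‖ ≤ min r 1 := (le_div_iff₀ hn).1 (min_le_right _ _)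
  obtain ⟨p, hp⟩ := exists_subgradAt H.pair.cu (t • a₁)
  have hpn := hsmall (t • a₁) (by
    rw [norm_smul, Real.norm_eq_abs, abs_of_pos htp]; exact htn.trans (min_le_left _ _)) p hp
  have hp1 := B.slope_pos_on_ray htp hp
  have hp2 := B.slope_neg_on_ray htp htρ hp
  have hupos := H.pos_on_ray htp
  have hle : u (t • a₁) ≤ t * ⟪p, a₁⟫ := by
    have h1 := hp 0
    rw [zero_sub, inner_neg_right, real_inner_smul_right, H.pair.u0] at h1
    linarith
  have hp1n : ⟪p, a₁⟫ ≤ W⁻¹ * ‖a₁‖ := (real_inner_le_norm p a₁).trans (by gcongr)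
  have hp2n : -⟪p, a₂⟫ ≤ W⁻¹ * ‖a₂‖ :=
    (neg_le_abs _).trans ((abs_real_inner_le_norm p a₂).trans (by gcongr))
  have hWi : W⁻¹ ≤ 1 := inv_le_one_of_one_le₀ hWp
  have hu1 : u (t • a₁) ≤ 1 := by
    calc u (t • a₁) ≤ t * ⟪p, a₁⟫ := hle
      _ ≤ t * (W⁻¹ * ‖a₁‖) := by gcongr
      _ = W⁻¹ * (t * ‖a₁‖) := by ring
      _ ≤ 1 * 1 := by gcongr; exact htn.trans (min_le_right _ _)
      _ = 1 := one_mul 1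
  have hpσ : ⟪p, a₁⟫ ≤ σ * -⟪p, a₂⟫ := by
    by_contra! hlt
    refine H.sub_smul_notMem_interior hp le_rfl ?_
    have h1 := H.pair.c2.add_smul_mem_interior_of_zero_mem_closure H.pair.swap.zero_mem_closure
      hkmem H.mem2 (α := -⟪p, a₂⟫ / k) (β := (⟪p, a₁⟫ - σ * -⟪p, a₂⟫) / k₀)
      (div_pos (by linarith) hk) (div_pos (by linarith) hk0) (by
        have h2 : -⟪p, a₂⟫ / k ≤ W⁻¹ * ‖a₂‖ / k := by gcongr
        have h3 : (⟪p, a₁⟫ - σ * -⟪p, a₂⟫) / k₀ ≤ W⁻¹ * ‖a₁‖ / k₀ := by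
          gcongr
          nlinarith
        have h4 : W⁻¹ * ‖a₂‖ / k + W⁻¹ * ‖a₁‖ / k₀ = W⁻¹ * (W - 1) := by rw [hW]; ring
        have h5 : W⁻¹ * W = 1 := inv_mul_cancel₀ (by linarith)
        have h6 : 0 < W⁻¹ := by positivity
        nlinarith)
    rw [smul_smul, smul_smul, div_mul_cancel₀ _ hk.ne', div_mul_cancel₀ _ hk0.ne'] at h1
    have e := H.frame.swap.expand p
    rw [zero_smul, sub_zero, e]
    convert h1 using 1
    module
  obtain ⟨K, xh, hKc, hKs, hKu, -, hK1, hK2⟩ := hC (u (t • a₁)) hupos hu1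
  have hm1 := hK2 (t • a₁) le_rfl (by rw [H.apply_neg_smul htp.le]; exact hupos.le)
  have hm2 := hK1 ((g * t) • a₂) (subset_closure (interior_subset
    (H.smul_mem1 (by positivity) (by nlinarith [B.rk])))) (hray t htp htρ)
  have hm3 := hKu _ (hKc hm1 (hKs _ hm2) (by norm_num : (0 : ℝ) ≤ 1 / 2)
    (by norm_num : (0 : ℝ) ≤ 1 / 2) (by norm_num))
  have h1 := hp ((1 / 2 : ℝ) • C⁻¹ • t • a₁ + (1 / 2 : ℝ) • -(C⁻¹ • (g * t) • a₂))
  rw [show (1 / 2 : ℝ) • C⁻¹ • t • a₁ + (1 / 2 : ℝ) • -(C⁻¹ • (g * t) • a₂) - t • a₁ =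
    (1 / 2 * C⁻¹ * t - t) • a₁ + (-(1 / 2 * C⁻¹ * (g * t))) • a₂ by module, inner_add_right,
    real_inner_smul_right, real_inner_smul_right] at h1
  set q := -⟪p, a₂⟫ with hq
  have hqp : 0 < q := by linarith
  have h2 : 0 ≤ 1 / 2 * C⁻¹ * t * ⟪p, a₁⟫ := by positivity
  have h3 : 1 / 2 * C⁻¹ * (g * t) * q ≤ (C + 1) * (t * ⟪p, a₁⟫) := by
    have : C * u (t • a₁) ≤ C * (t * ⟪p, a₁⟫) := by gcongr
    rw [hq]
    nlinarith
  have h4 : (C + 1) * (t * ⟪p, a₁⟫) ≤ (C + 1) * (t * (σ * q)) := by gcongr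
  have h5 : (C + 1) * (t * (σ * q)) = 1 / 4 * C⁻¹ * (g * t) * q := by
    rw [hσ]; field_simp
  have h6 : 0 < C⁻¹ * (g * t) * q := by positivity
  nlinarith

/-! ### Tangent directions -/

lemma exists_smul_mem_interior_of_tangent {Ω : Set R2} (hΩ : Convex ℝ Ω) {r w : R2}
    (hr : r ∈ tangentConeZero Ω) (hw : w ∈ interior Ω) {ε : ℝ} (hε : 0 < ε) :
    ∃ k : ℝ, 0 < k ∧ k • (r + ε • w) ∈ interior Ω := by
  obtain ⟨δ, hδ, hball⟩ := Metric.isOpen_iff.1 isOpen_interior w hw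
  obtain ⟨y, ⟨t, ht, x, hx, rfl⟩, hdist⟩ := Metric.mem_closure_iff.1 hr (ε * δ) (by positivity)
  have hw' : w + ε⁻¹ • (r - t • x) ∈ interior Ω := by
    refine hball ?_
    rw [mem_ball_iff_norm, add_sub_cancel_left, norm_smul, norm_inv, Real.norm_eq_abs,
      abs_of_pos hε, ← dist_eq_norm, inv_mul_lt_iff₀ hε]
    exact hdist
  have hs : 0 < t + ε := by positivity
  have h1 := hΩ.combo_self_interior_mem_interior hx hw' (a := t / (t + ε)) (b := ε / (t + ε))
    (by positivity) (by positivity) (by field_simp)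
  refine ⟨(t + ε)⁻¹, by positivity, ?_⟩
  have e : (t + ε)⁻¹ • (r + ε • w) =
      (t / (t + ε)) • x + (ε / (t + ε)) • (w + ε⁻¹ • (r - t • x)) := by
    rw [smul_add (ε / (t + ε)), smul_smul, div_mul_eq_mul_div, mul_inv_cancel₀ hε.ne',
      div_eq_mul_inv t, div_eq_mul_inv ε, one_div]
    module
  rwa [e]

lemma subset_tangentConeZero (Ω : Set R2) : Ω ⊆ tangentConeZero Ω :=
  fun x hx => subset_closure ⟨1, zero_le_one, x, hx, (one_smul ℝ x).symm⟩

lemma inner_pos_of_mem_interior {Ω : Set R2} {n : R2} (hn : ‖n‖ = 1)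
    (h : ∀ x ∈ Ω, 0 ≤ ⟪x, n⟫) {w : R2} (hw : w ∈ interior Ω) : 0 < ⟪w, n⟫ := by
  obtain ⟨τ, hτ, hmem⟩ := exists_add_smul_mem_interior hw n
  have h1 := h _ (interior_subset (hmem (-τ) (by rw [abs_neg, abs_of_pos hτ])))
  rw [inner_add_left, real_inner_smul_left, real_inner_self_eq_norm_sq, hn] at h1
  linarith

lemma exists_steep_mem_interior {Ω : Set R2} (hΩ : Convex ℝ Ω) (hi : (interior Ω).Nonempty)
    {a n : R2} (ha : ‖a‖ = 1) (hn : ‖n‖ = 1) (han : ⟪a, n⟫ = 0) (hat : a ∈ tangentConeZero Ω)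
    (h : ∀ x ∈ Ω, 0 ≤ ⟪x, n⟫) :
    ∃ m₀ : ℝ, ∀ m : ℝ, m₀ ≤ m → ∃ k : ℝ, 0 < k ∧ k • (n + m • a) ∈ interior Ω := by
  obtain ⟨w, hw⟩ := hi
  have hw2 := inner_pos_of_mem_interior hn h hw
  refine ⟨(⟪w, a⟫ + 1) / ⟪w, n⟫, fun m hm => ?_⟩
  rw [div_le_iff₀ hw2] at hm
  have hd : 0 < m * ⟪w, n⟫ - ⟪w, a⟫ := by linarith
  obtain ⟨k, hk, hmem⟩ := exists_smul_mem_interior_of_tangent hΩ hat hw (inv_pos.2 hd)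
  refine ⟨k * ((m * ⟪w, n⟫ - ⟪w, a⟫)⁻¹ * ⟪w, n⟫), by positivity, ?_⟩
  have e := eq_of_orthonormal ha hn han w
  have e2 : a + (m * ⟪w, n⟫ - ⟪w, a⟫)⁻¹ • w =
      ((m * ⟪w, n⟫ - ⟪w, a⟫)⁻¹ * ⟪w, n⟫) • (n + m • a) := by
    set d := m * ⟪w, n⟫ - ⟪w, a⟫ with hdd
    calc a + d⁻¹ • w = (d⁻¹ * d) • a + d⁻¹ • (⟪w, a⟫ • a + ⟪w, n⟫ • n) := by
          rw [inv_mul_cancel₀ hd.ne', one_smul, ← e]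
      _ = (d⁻¹ * ⟪w, n⟫) • (n + m • a) := by
          nth_rewrite 2 [hdd]
          module
  rwa [e2, smul_smul] at hmem

namespace OTPair

variable {u v : R2 → ℝ} {Ω₁ Ω₂ : Set R2}

lemma false_of_perpendicular (P : OTPair u v Ω₁ Ω₂) {a n : R2} (ha : ‖a‖ = 1) (hn : ‖n‖ = 1)
    (han : ⟪a, n⟫ = 0) (h1 : a ∈ tangentConeZero Ω₁) (h2 : -n ∈ tangentConeZero Ω₂)
    (half1 : ∀ x ∈ Ω₁, 0 ≤ ⟪x, n⟫) (half2 : ∀ y ∈ Ω₂, 0 ≤ ⟪y, a⟫) : False := by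
  have hna : ⟪n, a⟫ = 0 := by rw [real_inner_comm]; exact han
  have haa : ⟪a, a⟫ = 1 := by rw [real_inner_self_eq_norm_sq, ha]; norm_num
  have hnn : ⟪n, n⟫ = 1 := by rw [real_inner_self_eq_norm_sq, hn]; norm_num
  obtain ⟨m₁, hm₁⟩ := exists_steep_mem_interior P.c1 P.i1 ha hn han h1 half1
  obtain ⟨m₂, hm₂⟩ := exists_steep_mem_interior P.c2 P.i2 (a := -n) (n := a) (by rwa [norm_neg]) ha
    (by rw [inner_neg_left, hna, neg_zero]) h2 half2
  set m := max m₁ m₂ with hm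
  obtain ⟨k₁, hk₁, hmem₁⟩ := hm₁ m (le_max_left _ _)
  obtain ⟨k₂, hk₂, hmem₂⟩ := hm₂ m (le_max_right _ _)
  have scale : ∀ {Ω : Set R2}, Convex ℝ Ω → (0 : R2) ∈ closure Ω → ∀ {k k' : ℝ} {y : R2}, 0 < k →
      0 < k' → k' ≤ k → k • y ∈ interior Ω → k' • y ∈ interior Ω := by
    intro Ω hΩ h0 k k' y hk hk' hle hy
    have := hΩ.smul_mem_interior_of_zero_mem_closure h0 hy (div_pos hk' hk) ((div_le_one hk).2 hle)
    rwa [smul_smul, div_mul_cancel₀ _ hk.ne'] at this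
  have hk : 0 < min k₁ k₂ := lt_min hk₁ hk₂
  refine PerpConfig.false (u := u) (v := v) (Ω₁ := Ω₁) (Ω₂ := Ω₂) (a₁ := a) (a₂ := n + m • a)
    (b₁ := a + m • -n) (b₂ := n) (k₀ := min k₁ k₂)
    ⟨P, ⟨?_, han, ?_, ?_⟩, half1, half2, hk,
      scale P.c1 P.zero_mem_closure hk₁ hk (min_le_left _ _) hmem₁,
      scale P.c2 P.swap.zero_mem_closure hk₂ hk (min_le_right _ _) hmem₂, ?_⟩
  · rw [inner_add_right, real_inner_smul_right, inner_neg_right, haa, han]; ring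
  · rw [inner_add_right, real_inner_smul_right, inner_neg_right, inner_add_left, inner_add_left,
      real_inner_smul_left, real_inner_smul_left, haa, han, hna, hnn]
    ring
  · rw [inner_add_left, real_inner_smul_left, hnn, han]; ring
  · intro σ hσ
    obtain ⟨k, hk, hmem⟩ := hm₂ (m + σ⁻¹) ((le_max_right _ _).trans
      (le_add_of_nonneg_right (inv_pos.2 hσ).le))
    refine ⟨k / σ, by positivity, ?_⟩
    have e : (k / σ) • (σ • (a + m • -n) - n) = k • (a + (m + σ⁻¹) • -n) := by
      have e1 : k / σ * σ = k := div_mul_cancel₀ _ hσ.ne'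
      rw [smul_sub, smul_smul, e1, div_eq_mul_inv]
      module
    rwa [e]

end OTPair

/-- Rotation by a quarter turn, counterclockwise for `ε = 1` and clockwise for `ε = -1`. -/
def quarterTurn (ε : ℝ) (a : R2) : R2 := !₂[-(ε * a 1), ε * a 0]

lemma inner_eq_coords (x y : R2) : ⟪x, y⟫ = x 0 * y 0 + x 1 * y 1 := by
  rw [PiLp.inner_apply, Fin.sum_univ_two]
  simp [mul_comm]

lemma inner_quarterTurn (ε : ℝ) (a x : R2) : ⟪x, quarterTurn ε a⟫ = ε * det2 a x := by
  rw [inner_eq_coords]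
  simp [quarterTurn, det2]
  ring

lemma quarterTurn_expand {ε : ℝ} (hε : ε ^ 2 = 1) (r₁ r₂ x : R2) :
    ⟪r₁, r₂⟫ • x = ⟪x, r₂⟫ • r₁ + ⟪x, quarterTurn ε r₁⟫ • quarterTurn ε r₂ := by
  rw [inner_eq_coords, inner_eq_coords, inner_eq_coords]
  ext i
  fin_cases i
  · simp [quarterTurn]
    linear_combination (-(x 0 * r₁ 1 * r₂ 1) + x 1 * r₁ 0 * r₂ 1) * hε
  · simp [quarterTurn]
    linear_combination ((x 0 * r₁ 1 * r₂ 0) - x 1 * r₁ 0 * r₂ 0) * hε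

lemma norm_quarterTurn {ε : ℝ} (hε : ε ^ 2 = 1) (a : R2) : ‖quarterTurn ε a‖ = ‖a‖ := by
  have h : ‖quarterTurn ε a‖ ^ 2 = ‖a‖ ^ 2 := by
    rw [← real_inner_self_eq_norm_sq, ← real_inner_self_eq_norm_sq, inner_eq_coords,
      inner_eq_coords]
    simp [quarterTurn]
    linear_combination (a 0 * a 0 + a 1 * a 1) * hε
  exact (sq_eq_sq₀ (norm_nonneg _) (norm_nonneg _)).1 h

lemma inner_self_quarterTurn (ε : ℝ) (a : R2) : ⟪a, quarterTurn ε a⟫ = 0 := by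
  rw [inner_quarterTurn, det2]; ring

lemma quarterTurn_quarterTurn {ε : ℝ} (hε : ε ^ 2 = 1) (a : R2) :
    quarterTurn ε (quarterTurn ε a) = -a := by
  ext i
  fin_cases i
  · simp [quarterTurn]
    linear_combination a 0 * hε
  · simp [quarterTurn]
    linear_combination a 1 * hε

lemma quarterTurn_neg (ε : ℝ) (a : R2) : quarterTurn ε (-a) = -quarterTurn ε a := by
  ext i
  fin_cases i <;> simp [quarterTurn]

namespace OTPair

variable {u v : R2 → ℝ} {Ω₁ Ω₂ : Set R2}

lemma inner_nonpos_of_obtuse (P : OTPair u v Ω₁ Ω₂) {ε : ℝ} (hε : ε ^ 2 = 1) {r₁ r₂ : R2}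
    (t1 : r₁ ∈ tangentConeZero Ω₁)
    (h1 : ∀ x ∈ Ω₁, 0 ≤ ⟪x, quarterTurn ε r₁⟫) (h2 : ∀ y ∈ Ω₂, 0 ≤ ⟪y, quarterTurn ε r₂⟫)
    (hneg : ⟪r₁, r₂⟫ < 0) {x : R2} (hx : x ∈ closure Ω₁) : ⟪x, r₂⟫ ≤ 0 := by
  have hnonneg : ∀ x ∈ interior Ω₁, 0 ≤ ⟪x, -r₂⟫ := by
    intro x hx
    rw [inner_neg_right]
    by_contra! hlt
    have hpos : 0 < ⟪x, r₂⟫ := by linarith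
    obtain ⟨k, hk, hmem⟩ := exists_smul_mem_interior_of_tangent P.c1 t1 hx
      (div_pos (neg_pos.2 hneg) hpos)
    have e : r₁ + (-⟪r₁, r₂⟫ / ⟪x, r₂⟫) • x =
        -((⟪x, quarterTurn ε r₁⟫ / ⟪x, r₂⟫) • quarterTurn ε r₂) := by
      have h3 := quarterTurn_expand hε r₁ r₂ x
      have h4 : ⟪x, r₂⟫ • (r₁ + (-⟪r₁, r₂⟫ / ⟪x, r₂⟫) • x) =
          ⟪x, r₂⟫ • -((⟪x, quarterTurn ε r₁⟫ / ⟪x, r₂⟫) • quarterTurn ε r₂) := by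
        rw [smul_add, smul_smul, mul_div_cancel₀ _ hpos.ne', smul_neg, smul_smul,
          mul_div_cancel₀ _ hpos.ne', neg_smul, h3]
        module
      exact (smul_right_injective R2 hpos.ne') h4
    rw [e, smul_neg, smul_smul] at hmem
    set α := k * (⟪x, quarterTurn ε r₁⟫ / ⟪x, r₂⟫) with hα
    have hα0 : 0 ≤ α := mul_nonneg hk.le (div_nonneg (h1 x (interior_subset hx)) hpos.le)
    have hz : u (-(α • quarterTurn ε r₂)) ≤ 0 := by
      have := le_add_smul_of_slopes P.cu
        (fun x p hp => nonneg_inner_of_mem_closure h2 (P.r1 x p hp)) (-(α • quarterTurn ε r₂)) hα0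
      rwa [neg_add_cancel, P.u0] at this
    by_cases h0 : -(α • quarterTurn ε r₂) = 0
    · rw [h0] at hmem
      exact P.z1.2 hmem
    · exact absurd (P.pos_of_mem_closure (subset_closure (interior_subset hmem)) h0) (not_lt.2 hz)
  rw [← P.c1.closure_interior_eq_closure_of_nonempty_interior P.i1] at hx
  have := nonneg_inner_of_mem_closure hnonneg hx
  rw [inner_neg_right] at this
  linarith

/-- Corresponding tangent directions of the two domains make an acute angle. -/
theorem inner_tangent_pos (P : OTPair u v Ω₁ Ω₂) {ε : ℝ} (hε : ε ^ 2 = 1) {r₁ r₂ : R2}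
    (n1 : ‖r₁‖ = 1) (n2 : ‖r₂‖ = 1) (t1 : r₁ ∈ tangentConeZero Ω₁) (t2 : r₂ ∈ tangentConeZero Ω₂)
    (h1 : ∀ x ∈ Ω₁, 0 ≤ ⟪x, quarterTurn ε r₁⟫) (h2 : ∀ y ∈ Ω₂, 0 ≤ ⟪y, quarterTurn ε r₂⟫) :
    0 < ⟪r₁, r₂⟫ := by
  rcases lt_trichotomy ⟪r₁, r₂⟫ 0 with hneg | hzero | hpos
  · exfalso
    obtain ⟨x, hx⟩ := P.i1
    have hx0 : x ≠ 0 := by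
      rintro rfl
      exact P.z1.2 hx
    have hxc := subset_closure (interior_subset hx)
    have hu := P.pos_of_mem_closure hxc hx0
    obtain ⟨p, hp⟩ := exists_subgradAt P.cu x
    have hpc := P.r1 x p hp
    have g1 := P.inner_nonpos_of_obtuse hε t1 h1 h2 hneg hxc
    have g2 := P.swap.inner_nonpos_of_obtuse hε t2 h2 h1 (by rwa [real_inner_comm]) hpc
    have g3 := h1 x (interior_subset hx)
    have g4 := nonneg_inner_of_mem_closure h2 hpc
    have g5 := congrArg (fun z => ⟪p, z⟫) (quarterTurn_expand hε r₁ r₂ x)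
    simp only [inner_add_right, real_inner_smul_right] at g5
    have g6 := hp 0
    rw [zero_sub, inner_neg_right, P.u0] at g6
    nlinarith [mul_nonneg_of_nonpos_of_nonpos g1 g2, mul_nonneg g3 g4]
  · exfalso
    have hd := quarterTurn_expand hε r₁ r₁ r₂
    rw [real_inner_self_eq_norm_sq, n1, real_inner_comm, hzero, zero_smul, zero_add, one_pow,
      one_smul] at hd
    have hnq := (norm_quarterTurn hε r₁).trans n1
    have habs : |⟪r₂, quarterTurn ε r₁⟫| = 1 := by
      have := congrArg norm hd
      rw [n2, norm_smul, hnq, mul_one, Real.norm_eq_abs] at this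
      exact this.symm
    rcases eq_or_eq_neg_of_abs_eq habs with h | h
    · rw [h, one_smul] at hd
      have hq : quarterTurn ε r₂ = -r₁ := by rw [hd, quarterTurn_quarterTurn hε]
      refine P.swap.false_of_perpendicular (a := r₂) (n := quarterTurn ε r₂) n2
        ((norm_quarterTurn hε r₂).trans n2) (inner_self_quarterTurn ε r₂) t2 ?_ h2 ?_
      · rwa [hq, neg_neg]
      · rwa [hd]
    · rw [h, neg_smul, one_smul] at hd
      have hq : quarterTurn ε r₂ = r₁ := by
        rw [hd, quarterTurn_neg, quarterTurn_quarterTurn hε, neg_neg]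
      refine P.false_of_perpendicular (a := r₁) (n := quarterTurn ε r₁) n1 hnq
        (inner_self_quarterTurn ε r₁) t1 ?_ h1 ?_
      · rwa [← hd]
      · rwa [← hq]
  · exact hpos

end OTPair

/-- obliqueness for pairs in `S(δ̄)`: at the origin, the left tangents of
`Ω₁` and `Ω₂` make a strictly positive inner product, and likewise for the right tangents. -/
theorem stmt_9 (δb : ℝ) (hδb : 0 < δb)
    (u v : R2 → ℝ) (Ω₁ Ω₂ : Set R2) (L l : ℝ → ℝ) (e f : ℝ → R2)
    (hmem : InSFamily δb u v Ω₁ Ω₂ L l e f)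
    (L₁ L₂ R₁ R₂ : R2)
    (hL₁ : IsLeftTangent Ω₁ L₁) (hL₂ : IsLeftTangent Ω₂ L₂)
    (hR₁ : IsRightTangent Ω₁ R₁) (hR₂ : IsRightTangent Ω₂ R₂) :
    0 < ⟪L₁, L₂⟫ ∧ 0 < ⟪R₁, R₂⟫ := by
  have P : OTPair u v Ω₁ Ω₂ := InSFamily.otPair hδb hmem
  have left : ∀ {Ω : Set R2} {r : R2}, IsLeftTangent Ω r →
      ∀ x ∈ Ω, 0 ≤ ⟪x, quarterTurn (-1) r⟫ := by
    intro Ω r hr x hx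
    rw [inner_quarterTurn]
    linarith [hr.2.2 x (subset_tangentConeZero Ω hx)]
  have right : ∀ {Ω : Set R2} {r : R2}, IsRightTangent Ω r →
      ∀ x ∈ Ω, 0 ≤ ⟪x, quarterTurn 1 r⟫ := by
    intro Ω r hr x hx
    rw [inner_quarterTurn]
    linarith [hr.2.2 x (subset_tangentConeZero Ω hx)]
  exact ⟨P.inner_tangent_pos (by norm_num) hL₁.1 hL₂.1 hL₁.2.1 hL₂.2.1 (left hL₁) (left hL₂),
    P.inner_tangent_pos (by norm_num) hR₁.1 hR₂.1 hR₁.2.1 hR₂.2.1 (right hR₁) (right hR₂)⟩
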